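/- There exists an absolute constant c₁ such that for every positive integer r, every prime q ≥ exp(2r(log r + log log(r+2) + c₁)) with q ≡ 1 (mod 2r), and every positive integer k with gcd(k, q−1) = r, one has γ_{k,q} > 1/2 and γ'_{k,q} > 1/2 (the criterion under which the Landau approximation C·x/(log x)^{1/h} is asymptotically better than the Ramanujan approximation C·∫₂ˣ dt/(log t)^{1/h} for S_{k,q}(x) and S'_{k,q}(x)). -/

import Mathlib

open Filter Topology

/-- The `k`-th divisor sum function `σ_k(n) = ∑_{d ∣ n} d^k`. -/
def sigmak (k n : ℕ) : ℕ := ∑ d ∈ n.divisors, d ^ k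

/-- The multiplicative order `g_p` of `p^m` modulo `q`. -/
noncomputable def gp (q m p : ℕ) : ℕ := orderOf ((p : ZMod q) ^ m)

/-- The local term at a prime `p` of the prime sum `S(m,q)` of the paper. -/
noncomputable def Sterm (q m p : ℕ) : ℝ :=
  if p = q then 0 else
    (if gp q m p = 1 then
        (q : ℝ) * Real.log p / ((p : ℝ) ^ q - 1)
          - ((q : ℝ) - 1) * Real.log p / ((p : ℝ) ^ (q - 1) - 1)
      else 0)
    + (if 3 ≤ gp q m p then
        (gp q m p : ℝ) * Real.log p / ((p : ℝ) ^ gp q m p - 1)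
          - ((gp q m p : ℝ) - 1) * Real.log p / ((p : ℝ) ^ (gp q m p - 1) - 1)
      else 0)
    + (if gp q m p = 2 then Real.log p / ((p : ℝ) ^ 2 - 1) else 0)
    + (if 4 ≤ gp q m p ∧ 2 ∣ gp q m p then
        Real.log p / ((p : ℝ) ^ (gp q m p / 2) - ((p : ℝ) ^ (gp q m p / 2))⁻¹)
      else 0)

/-- The prime sum `S(m,q)` of the paper (a sum over all primes `p ≠ q`). -/
noncomputable def Smq (q m : ℕ) : ℝ := ∑' p : Nat.Primes, Sterm q m (p : ℕ)

/-- The Dirichlet L-function attached to a Dirichlet character mod `q` (junk value for `q = 0`). -/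
noncomputable def Lfun {q : ℕ} (χ : DirichletCharacter ℂ q) (s : ℂ) : ℂ :=
  if h : q = 0 then 0 else
    haveI : NeZero q := ⟨h⟩
    DirichletCharacter.LFunction χ s

/-- `γ_{K_m} = γ + ∑_{χ ∈ X_m^*} (L'/L)(1,χ)`, the Euler–Kronecker constant of the unique
subfield of `ℚ(ζ_q)` of degree `(q-1)/m`; here `X_m^*` is the set of nonprincipal Dirichlet
characters mod `q` that are trivial on the group `C_m` of `m`-th roots of unity mod `q`. -/
noncomputable def gammaK (q m : ℕ) : ℝ :=
  Real.eulerMascheroniConstant +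
    (∑ᶠ χ ∈ {χ : DirichletCharacter ℂ q | χ ≠ 1 ∧ ∀ a : ZMod q, a ^ m = 1 → χ a = 1},
      deriv (Lfun χ) 1 / Lfun χ 1).re

/-- The Euler–Kronecker constant `γ_{k,q}`, for `q` an odd prime, `r = gcd(k, q-1)` and
`h = (q-1)/r` even:  `γ_{k,q} = γ − (1/h)(2γ_{K_{2r}} − γ_{K_r}) − log q/(h(q−1)) − S(r,q)`. -/
noncomputable def gammakq (q k : ℕ) : ℝ :=
  Real.eulerMascheroniConstant
    - (1 / (((q - 1) / Nat.gcd k (q - 1) : ℕ) : ℝ)) *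
        (2 * gammaK q (2 * Nat.gcd k (q - 1)) - gammaK q (Nat.gcd k (q - 1)))
    - Real.log q / ((((q - 1) / Nat.gcd k (q - 1) : ℕ) : ℝ) * ((q : ℝ) - 1))
    - Smq q (Nat.gcd k (q - 1))

/-- `γ'_{k,q} = γ_{k,q} + log q/(q-1)`. -/
noncomputable def gammakq' (q k : ℕ) : ℝ := gammakq q k + Real.log q / ((q : ℝ) - 1)

lemma norm_sum_range_mul_le_of_antitone {f : ℕ → ℂ} {a : ℕ → ℝ} {B : ℝ}
    (hB : ∀ n, ‖∑ i ∈ Finset.range n, f i‖ ≤ B) (ha : Antitone a) (ha0 : ∀ n, 0 ≤ a n) (n : ℕ) :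
    ‖∑ i ∈ Finset.range n, (a i : ℂ) * f i‖ ≤ a 0 * B := by
  have key : ∑ i ∈ Finset.range n, (a i : ℂ) * f i = (a n : ℂ) * ∑ i ∈ Finset.range n, f i +
      ∑ i ∈ Finset.range n, ((a i - a (i + 1) : ℝ) : ℂ) * ∑ j ∈ Finset.range (i + 1), f j := by
    induction n with
    | zero => simp
    | succ n ih =>
      rw [Finset.sum_range_succ, ih, Finset.sum_range_succ f, Finset.sum_range_succ _ n,
        Finset.sum_range_succ f]
      push_cast
      ring
  have hB0 : 0 ≤ B := (norm_nonneg _).trans (hB 0)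
  rw [key]
  calc _ ≤ a n * B + ∑ i ∈ Finset.range n, (a i - a (i + 1)) * B := by
        refine (norm_add_le _ _).trans (add_le_add ?_ ((norm_sum_le _ _).trans ?_))
        · rw [norm_mul, Complex.norm_real, Real.norm_of_nonneg (ha0 n)]
          exact mul_le_mul_of_nonneg_left (hB n) (ha0 n)
        · refine Finset.sum_le_sum fun i _ ↦ ?_
          have h : 0 ≤ a i - a (i + 1) := sub_nonneg.2 (ha (Nat.le_succ i))
          rw [norm_mul, Complex.norm_real, Real.norm_of_nonneg h]
          exact mul_le_mul_of_nonneg_left (hB _) h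
    _ = a 0 * B := by
        rw [← Finset.sum_mul, Finset.sum_range_sub']
        ring

lemma norm_geom_sum_le {z : ℂ} (hz : ‖z‖ = 1) (hz1 : z ≠ 1) (n : ℕ) :
    ‖∑ i ∈ Finset.range n, z ^ i‖ ≤ 2 / ‖z - 1‖ := by
  rw [geom_sum_eq hz1, norm_div]
  gcongr
  refine (norm_sub_le _ _).trans ?_
  rw [norm_pow, hz, one_pow, norm_one]
  norm_num

lemma two_div_norm_stdAddChar_sub_one_le {q : ℕ} [NeZero q] {k : ℕ} (hk : 0 < k) (hkq : k < q) :
    2 / ‖ZMod.stdAddChar (k : ZMod q) - 1‖ ≤ q / 2 * ((k : ℝ)⁻¹ + ((q - k : ℕ) : ℝ)⁻¹) := by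
  have hq : (0 : ℝ) < q := by exact_mod_cast hk.trans hkq
  have hk' : (0 : ℝ) < k := by exact_mod_cast hk
  have hqk : (0 : ℝ) < ((q - k : ℕ) : ℝ) := by exact_mod_cast Nat.sub_pos_of_lt hkq
  have hcast : ((q - k : ℕ) : ℝ) = q - k := by rw [Nat.cast_sub hkq.le]
  have e1 : ‖ZMod.stdAddChar (k : ZMod q) - 1‖ = 2 * |Real.sin (Real.pi * k / q)| := by
    have h := ZMod.stdAddChar_coe (N := q) (k : ℤ)
    have h2 : (2 * Real.pi * Complex.I * ((k : ℤ) : ℂ) / q : ℂ) =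
        Complex.I * ((2 * (Real.pi * k / q) : ℝ) : ℂ) := by
      push_cast
      ring
    rw [h2] at h
    rw [show (k : ZMod q) = ((k : ℤ) : ZMod q) by simp, h, Complex.norm_exp_I_mul_ofReal_sub_one,
      norm_mul, Real.norm_eq_abs, Real.norm_eq_abs, mul_div_cancel_left₀ _ two_ne_zero]
    norm_num
  have aux : ∀ t : ℝ, 0 < t → t ≤ q / 2 → 2 * t / q ≤ Real.sin (Real.pi * t / q) := by
    intro t ht htq
    have h := Real.mul_le_sin (x := Real.pi * t / q) (by positivity) (by
      rw [div_le_div_iff₀ hq two_pos]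
      nlinarith [Real.pi_pos])
    refine le_trans (le_of_eq ?_) h
    field_simp
  rw [e1]
  rcases le_total (k : ℝ) (q / 2) with h | h
  · have h1 := aux k hk' h
    have h2 : 2 * (2 * k / q) ≤ 2 * |Real.sin (Real.pi * k / q)| := by
      gcongr
      exact h1.trans (le_abs_self _)
    calc _ ≤ 2 / (2 * (2 * k / q) : ℝ) := by gcongr
      _ = q / 2 * (k : ℝ)⁻¹ := by field_simp
      _ ≤ _ := by
        gcongr
        linarith [inv_pos.2 hqk]
  · have h1 := aux ((q - k : ℕ) : ℝ) hqk (by rw [hcast]; linarith)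
    have h3 : Real.sin (Real.pi * ((q - k : ℕ) : ℝ) / q) = Real.sin (Real.pi * k / q) := by
      rw [← Real.sin_pi_sub]
      congr 1
      rw [hcast]
      field_simp
      ring
    have h2 : 2 * (2 * ((q - k : ℕ) : ℝ) / q) ≤ 2 * |Real.sin (Real.pi * k / q)| := by
      gcongr
      rw [← h3]
      exact h1.trans (le_abs_self _)
    calc _ ≤ 2 / (2 * (2 * ((q - k : ℕ) : ℝ) / q) : ℝ) := by gcongr
      _ = q / 2 * (((q - k : ℕ) : ℝ))⁻¹ := by field_simp
      _ ≤ _ := by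
        gcongr
        linarith [inv_pos.2 hk']

lemma sum_zmod_eq_sum_range {q : ℕ} [NeZero q] {M : Type*} [AddCommMonoid M] (F : ZMod q → M) :
    ∑ b, F b = ∑ k ∈ Finset.range q, F (k : ZMod q) := by
  refine Finset.sum_bij' (fun b _ ↦ b.val) (fun k _ ↦ (k : ZMod q)) ?_ ?_ ?_ ?_ ?_
  · intro b _
    simpa using ZMod.val_lt b
  · simp
  · simp
  · intro k hk
    exact ZMod.val_cast_of_lt (Finset.mem_range.1 hk)
  · simp

lemma norm_gaussSum_stdAddChar {q : ℕ} [Fact q.Prime] {χ : DirichletCharacter ℂ q} (hχ : χ ≠ 1) :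
    ‖gaussSum χ (ZMod.stdAddChar (N := q))‖ = √q := by
  have h := gaussSum_mul_gaussSum_eq_card hχ (ZMod.isPrimitive_stdAddChar q)
  rw [← star_gaussSum_eq, ZMod.card] at h
  have h2 := congrArg norm h
  rw [norm_mul, norm_star, Complex.norm_natCast] at h2
  rw [← h2, Real.sqrt_mul_self (norm_nonneg _)]

/-- The Pólya–Vinogradov inequality for prime moduli. -/
theorem norm_sum_dirichletCharacter_le {q : ℕ} [Fact q.Prime] {χ : DirichletCharacter ℂ q}
    (hχ : χ ≠ 1) (M n : ℕ) :
    ‖∑ i ∈ Finset.range n, χ ((M + i : ℕ) : ZMod q)‖ ≤ √q * (1 + Real.log q) := by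
  set e := ZMod.stdAddChar (N := q)
  have hq : (0 : ℝ) < q := by exact_mod_cast (Fact.out : q.Prime).pos
  have hχi : χ⁻¹ ≠ 1 := inv_ne_one.2 hχ
  have hg := norm_gaussSum_stdAddChar hχi
  have hshift : ∀ a : ZMod q, χ a * gaussSum χ⁻¹ e = ∑ b, χ⁻¹ b * e (a * b) := by
    intro a
    by_cases ha : a = 0
    · subst ha
      simp only [zero_mul, AddChar.map_zero_eq_one, mul_one, MulChar.sum_eq_zero_of_ne_one hχi]
      rw [MulChar.map_zero, zero_mul]
    · have := gaussSum_mulShift_eq χ⁻¹ e (Units.mk0 a ha)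
      rw [inv_inv, Units.val_mk0] at this
      rw [← this]
      simp [gaussSum, AddChar.mulShift_apply]
  have hsum : (∑ i ∈ Finset.range n, χ ((M + i : ℕ) : ZMod q)) * gaussSum χ⁻¹ e =
      ∑ b, χ⁻¹ b * (e (M * b) * ∑ i ∈ Finset.range n, e b ^ i) := by
    rw [Finset.sum_mul, Finset.sum_congr rfl fun i _ ↦ hshift _, Finset.sum_comm]
    refine Finset.sum_congr rfl fun b _ ↦ ?_
    rw [← Finset.mul_sum]
    congr 1
    rw [Finset.mul_sum]
    refine Finset.sum_congr rfl fun i _ ↦ ?_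
    rw [← AddChar.map_nsmul_eq_pow, ← AddChar.map_add_eq_mul]
    congr 1
    rw [nsmul_eq_mul]
    push_cast
    ring
  have hharm : ∑ k ∈ Finset.range q, (k : ℝ)⁻¹ ≤ 1 + Real.log q := by
    refine le_trans ?_ (harmonic_le_one_add_log q)
    rw [harmonic_eq_sum_Icc]
    push_cast
    have : Finset.range q ⊆ insert 0 (Finset.Icc 1 q) := by
      intro k hk
      simp at hk ⊢
      omega
    refine (Finset.sum_le_sum_of_subset_of_nonneg this fun _ _ _ ↦ by positivity).trans ?_
    rw [Finset.sum_insert (by simp)]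
    simp
  have hharm2 : ∑ k ∈ Finset.range q, (((q - k : ℕ) : ℝ))⁻¹ ≤ 1 + Real.log q := by
    refine le_trans (le_of_eq ?_) (harmonic_le_one_add_log q)
    rw [← Finset.sum_range_reflect, harmonic]
    push_cast
    refine Finset.sum_congr rfl fun k hk ↦ ?_
    have := Finset.mem_range.1 hk
    rw [show q - (q - 1 - k) = k + 1 by omega]
    push_cast
    rfl
  have hbound : ‖∑ b, χ⁻¹ b * (e (M * b) * ∑ i ∈ Finset.range n, e b ^ i)‖ ≤
      q * (1 + Real.log q) := by
    refine (norm_sum_le _ _).trans ?_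
    rw [sum_zmod_eq_sum_range]
    have : ∀ k ∈ Finset.range q, ‖χ⁻¹ (k : ZMod q) * (e (M * (k : ZMod q)) *
        ∑ i ∈ Finset.range n, e (k : ZMod q) ^ i)‖ ≤
        q / 2 * ((k : ℝ)⁻¹ + ((q - k : ℕ) : ℝ)⁻¹) := by
      intro k hk
      rcases Nat.eq_zero_or_pos k with rfl | hk0
      · have h0 : χ⁻¹ ((0 : ℕ) : ZMod q) = 0 := by
          rw [Nat.cast_zero, MulChar.map_zero]
        rw [h0, zero_mul, norm_zero]
        positivity
      · have hkq := Finset.mem_range.1 hk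
        have hne : e (k : ZMod q) ≠ 1 := by
          intro h
          rw [← AddChar.map_zero_eq_one e] at h
          have := ZMod.injective_stdAddChar h
          rw [ZMod.natCast_eq_zero_iff] at this
          exact absurd (Nat.le_of_dvd hk0 this) (not_le.2 hkq)
        refine le_trans ?_ (two_div_norm_stdAddChar_sub_one_le hk0 hkq)
        rw [norm_mul, norm_mul, AddChar.norm_apply, one_mul]
        refine (mul_le_of_le_one_left (norm_nonneg _) (DirichletCharacter.norm_le_one _ _)).trans ?_
        exact norm_geom_sum_le (AddChar.norm_apply _ _) hne n
    refine (Finset.sum_le_sum this).trans ?_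
    rw [← Finset.mul_sum, Finset.sum_add_distrib]
    nlinarith
  rw [← hsum, norm_mul, hg] at hbound
  have hs : 0 < √(q : ℝ) := Real.sqrt_pos.2 hq
  have : (q : ℝ) = √q * √q := (Real.mul_self_sqrt hq.le).symm
  rw [mul_comm] at hbound
  refine le_of_mul_le_mul_left (hbound.trans (le_of_eq ?_)) hs
  rw [← mul_assoc, ← this]

lemma norm_hasSum_sub_sum_range_le {q : ℕ} [Fact q.Prime] {χ : DirichletCharacter ℂ q}
    (hχ : χ ≠ 1) {a : ℕ → ℝ} {M : ℕ} (ha : Antitone fun i ↦ a (M + i)) (ha0 : ∀ i, 0 ≤ a (M + i))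
    {S : ℂ} (hS : HasSum (fun n ↦ (a n : ℂ) * χ n) S) :
    ‖S - ∑ n ∈ Finset.range M, (a n : ℂ) * χ n‖ ≤ a M * (√q * (1 + Real.log q)) := by
  have h1 : Tendsto (fun N ↦ ∑ i ∈ Finset.range N, (a (M + i) : ℂ) * χ ((M + i : ℕ) : ZMod q)) atTop
      (𝓝 (S - ∑ n ∈ Finset.range M, (a n : ℂ) * χ n)) := by
    have := (hS.tendsto_sum_nat.comp (tendsto_add_atTop_nat M)).sub_const
      (∑ n ∈ Finset.range M, (a n : ℂ) * χ n)
    refine this.congr fun N ↦ ?_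
    rw [Function.comp_apply, add_comm N M, Finset.sum_range_add]
    ring
  refine le_of_tendsto h1.norm (Eventually.of_forall fun N ↦ ?_)
  exact norm_sum_range_mul_le_of_antitone (a := fun i ↦ a (M + i))
    (fun n ↦ norm_sum_dirichletCharacter_le hχ M n) ha ha0 N

lemma logMul_iterate_apply (f : ℕ → ℂ) (k n : ℕ) :
    (LSeries.logMul^[k] f) n = (Complex.log n) ^ k * f n := by
  induction k generalizing f with
  | zero => simp
  | succ k ih =>
    rw [Function.iterate_succ_apply, ih, LSeries.logMul]
    ring

lemma hasSum_iteratedDeriv_LFunction {q : ℕ} [NeZero q] (χ : DirichletCharacter ℂ q)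
    (hq : χ (0 : ZMod q) = 0) (k : ℕ) {s : ℝ} (hs : 1 < s) :
    HasSum (fun n : ℕ ↦ ((Real.log n ^ k / (n : ℝ) ^ s : ℝ) : ℂ) * χ n)
      ((-1) ^ k * iteratedDeriv k (DirichletCharacter.LFunction χ) s) := by
  have hs' : 1 < (s : ℂ).re := by simpa using hs
  have habs : LSeries.abscissaOfAbsConv (χ ·) < (s : ℂ).re := by
    rw [DirichletCharacter.absicssaOfAbsConv_eq_one (NeZero.ne q)]
    exact_mod_cast hs'
  have h1 : iteratedDeriv k (DirichletCharacter.LFunction χ) s =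
      iteratedDeriv k (LSeries (χ ·)) s := by
    refine Filter.EventuallyEq.iteratedDeriv_eq k ?_
    filter_upwards [(isOpen_lt continuous_const Complex.continuous_re).mem_nhds hs'] with z hz
    exact DirichletCharacter.LFunction_eq_LSeries χ hz
  rw [h1, LSeries_iteratedDeriv k habs, ← mul_assoc, ← mul_pow]
  simp only [mul_neg, mul_one, neg_neg, one_pow, one_mul]
  have hsum : LSeriesSummable (LSeries.logMul^[k] (χ ·)) (s : ℂ) := by
    apply LSeriesSummable_of_abscissaOfAbsConv_lt_re
    rwa [LSeries.absicssaOfAbsConv_logPowMul]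
  refine hsum.hasSum.congr_fun fun n ↦ ?_
  rcases Nat.eq_zero_or_pos n with rfl | hn
  · simp [hq]
  · rw [LSeries.term_of_ne_zero hn.ne', logMul_iterate_apply]
    push_cast
    rw [Complex.ofReal_cpow (Nat.cast_nonneg n), Complex.ofReal_natCast,
      div_mul_eq_mul_div]

lemma antitone_log_pow_div_rpow {k q : ℕ} (hk : k ≤ 2) (hq : 8 ≤ q) {s : ℝ} (hs : 1 ≤ s) :
    Antitone fun i : ℕ ↦ Real.log ((q + i : ℕ) : ℝ) ^ k / ((q + i : ℕ) : ℝ) ^ s := by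
  have hq' : (8 : ℝ) ≤ q := by exact_mod_cast hq
  have he : Real.exp ((1 / 2 : ℝ)⁻¹) ≤ 8 := by
    have := Real.exp_one_lt_d9
    rw [show ((1 / 2 : ℝ)⁻¹) = 1 + 1 by norm_num, Real.exp_add]
    nlinarith [Real.exp_pos 1]
  have hk' : (k : ℝ) ≤ 2 := by exact_mod_cast hk
  have key : ∀ x : ℝ, 8 ≤ x → Real.log x ^ k / x ^ s =
      (Real.log x / x ^ (1 / 2 : ℝ)) ^ k * (x ^ (s - k / 2))⁻¹ := by
    intro x hx
    have hx0 : 0 < x := by linarith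
    rw [div_pow, ← Real.rpow_natCast (x ^ (1 / 2 : ℝ)), ← Real.rpow_mul hx0.le, div_mul_eq_mul_div,
      mul_comm, ← div_eq_inv_mul, div_div, ← Real.rpow_add hx0]
    congr 2
    ring
  refine antitone_nat_of_succ_le fun i ↦ ?_
  have h1 : (8 : ℝ) ≤ ((q + i : ℕ) : ℝ) := by
    push_cast
    linarith [(Nat.cast_nonneg i : (0 : ℝ) ≤ i)]
  have h2 : ((q + i : ℕ) : ℝ) ≤ ((q + (i + 1) : ℕ) : ℝ) := by
    push_cast
    linarith
  rw [key _ h1, key _ (h1.trans h2)]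
  have h3 := Real.log_div_self_rpow_antitoneOn (a := 1 / 2) (by norm_num)
    (Set.mem_Ici.2 (he.trans h1)) (Set.mem_Ici.2 (he.trans (h1.trans h2))) h2
  have h4 : 0 ≤ Real.log ((q + (i + 1) : ℕ) : ℝ) / ((q + (i + 1) : ℕ) : ℝ) ^ (1 / 2 : ℝ) :=
    div_nonneg (Real.log_natCast_nonneg _) (by positivity)
  have h5 : 0 ≤ s - k / 2 := by linarith
  have h6 : (0 : ℝ) < ((q + i : ℕ) : ℝ) := by linarith
  simp only at h3
  gcongr

lemma sum_range_log_pow_div_le {k q : ℕ} (hq : 8 ≤ q) {s : ℝ} (hs : 1 ≤ s) :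
    ∑ n ∈ Finset.range q, Real.log n ^ k / (n : ℝ) ^ s ≤ Real.log q ^ k * (1 + Real.log q) := by
  have hq0 : 0 < q := by omega
  have : ∀ n ∈ Finset.range q, Real.log n ^ k / (n : ℝ) ^ s ≤ Real.log q ^ k * (n : ℝ)⁻¹ := by
    intro n hn
    rcases Nat.eq_zero_or_pos n with rfl | hn0
    · have : s ≠ 0 := by linarith
      simp [Real.zero_rpow this]
    · have h1 : (1 : ℝ) ≤ n := by exact_mod_cast hn0
      have h2 : (n : ℝ) ≤ q := by exact_mod_cast (Finset.mem_range.1 hn).le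
      rw [div_eq_mul_inv]
      have h3 : (n : ℝ) ≤ (n : ℝ) ^ s := Real.self_le_rpow_of_one_le h1 hs
      have h4 : 0 ≤ Real.log n := Real.log_nonneg h1
      have h5 : Real.log n ≤ Real.log q := Real.log_le_log (by linarith) h2
      gcongr
  refine (Finset.sum_le_sum this).trans ?_
  rw [← Finset.mul_sum]
  have h6 : 0 ≤ Real.log q := Real.log_natCast_nonneg _
  gcongr
  refine le_trans ?_ (harmonic_le_one_add_log q)
  rw [harmonic_eq_sum_Icc]
  push_cast
  have : Finset.range q ⊆ insert 0 (Finset.Icc 1 q) := by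
    intro k hk
    simp at hk ⊢
    omega
  refine (Finset.sum_le_sum_of_subset_of_nonneg this fun _ _ _ ↦ by positivity).trans ?_
  rw [Finset.sum_insert (by simp)]
  simp

/-- Bounds for `L(s, χ)`, `L'(s, χ)` and `L''(s, χ)` for real `s ∈ (1, ∞)`. -/
lemma norm_iteratedDeriv_LFunction_le_of_one_lt {q : ℕ} [Fact q.Prime] (hq : 8 ≤ q)
    {χ : DirichletCharacter ℂ q} (hχ : χ ≠ 1) {k : ℕ} (hk : k ≤ 2) {s : ℝ} (hs : 1 < s) :
    ‖iteratedDeriv k (DirichletCharacter.LFunction χ) s‖ ≤ 2 * (1 + Real.log q) ^ (k + 1) := by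
  have hl : 0 ≤ Real.log q := Real.log_natCast_nonneg _
  have h := norm_hasSum_sub_sum_range_le hχ (a := fun n ↦ Real.log n ^ k / (n : ℝ) ^ s) (M := q)
    (antitone_log_pow_div_rpow hk hq hs.le)
    (fun i ↦ div_nonneg (pow_nonneg (Real.log_natCast_nonneg _) _) (by positivity))
    (hasSum_iteratedDeriv_LFunction χ (MulChar.map_zero _) k hs)
  have h1 : ‖∑ n ∈ Finset.range q, ((Real.log n ^ k / (n : ℝ) ^ s : ℝ) : ℂ) * χ n‖ ≤
      Real.log q ^ k * (1 + Real.log q) := by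
    refine (norm_sum_le _ _).trans (le_trans (Finset.sum_le_sum fun n _ ↦ ?_)
      (sum_range_log_pow_div_le (k := k) hq hs.le))
    rw [norm_mul, Complex.norm_real, Real.norm_of_nonneg
      (div_nonneg (pow_nonneg (Real.log_natCast_nonneg _) _) (by positivity))]
    exact mul_le_of_le_one_right
      (div_nonneg (pow_nonneg (Real.log_natCast_nonneg _) _) (by positivity))
      (DirichletCharacter.norm_le_one _ _)
  have h2 : Real.log q ^ k / (q : ℝ) ^ s * (√q * (1 + Real.log q)) ≤
      Real.log q ^ k * (1 + Real.log q) := by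
    have hq1 : (1 : ℝ) ≤ q := by exact_mod_cast (by omega : 1 ≤ q)
    have h3 : √(q : ℝ) ≤ (q : ℝ) ^ s :=
      (Real.sqrt_le_iff.2 ⟨by linarith, by nlinarith⟩).trans
        (Real.self_le_rpow_of_one_le hq1 hs.le)
    rw [div_mul_eq_mul_div, div_le_iff₀ (by positivity)]
    calc _ = Real.log q ^ k * (1 + Real.log q) * √q := by ring
      _ ≤ _ := by gcongr
  have h4 : ‖((-1) ^ k * iteratedDeriv k (DirichletCharacter.LFunction χ) s : ℂ)‖ =
      ‖iteratedDeriv k (DirichletCharacter.LFunction χ) s‖ := by simp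
  rw [← h4]
  have h5 : Real.log q ^ k * (1 + Real.log q) ≤ (1 + Real.log q) ^ (k + 1) := by
    rw [pow_succ]
    gcongr
    linarith
  have h6 := norm_sub_norm_le ((-1) ^ k * iteratedDeriv k (DirichletCharacter.LFunction χ) s : ℂ)
    (∑ n ∈ Finset.range q, ((Real.log n ^ k / (n : ℝ) ^ s : ℝ) : ℂ) * χ n)
  linarith

lemma norm_iteratedDeriv_LFunction_le {q : ℕ} [Fact q.Prime] (hq : 8 ≤ q)
    {χ : DirichletCharacter ℂ q} (hχ : χ ≠ 1) {k : ℕ} (hk : k ≤ 2) {s : ℝ} (hs : 1 ≤ s) :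
    ‖iteratedDeriv k (DirichletCharacter.LFunction χ) s‖ ≤ 2 * (1 + Real.log q) ^ (k + 1) := by
  have hd : ContDiff ℂ k (DirichletCharacter.LFunction χ) :=
    (DirichletCharacter.differentiable_LFunction hχ).contDiff
  have hc : Continuous fun t : ℝ ↦ ‖iteratedDeriv k (DirichletCharacter.LFunction χ) t‖ :=
    ((hd.continuous_iteratedDeriv k le_rfl).comp Complex.continuous_ofReal).norm
  refine le_of_tendsto (hc.continuousWithinAt (s := Set.Ioi s) (x := s)) ?_
  filter_upwards [self_mem_nhdsWithin] with t ht
  exact norm_iteratedDeriv_LFunction_le_of_one_lt hq hχ hk (hs.trans_lt ht)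

lemma norm_LFunction_one_sub_sum_range_le {q : ℕ} [Fact q.Prime]
    {χ : DirichletCharacter ℂ q} (hχ : χ ≠ 1) {M : ℕ} (hM : 0 < M) :
    ‖DirichletCharacter.LFunction χ 1 - ∑ n ∈ Finset.range M, ((n : ℝ)⁻¹ : ℂ) * χ n‖ ≤
      (M : ℝ)⁻¹ * (√q * (1 + Real.log q)) := by
  have hM' : (0 : ℝ) < M := by exact_mod_cast hM
  have key : ∀ s : ℝ, 1 < s → ‖DirichletCharacter.LFunction χ s -
      ∑ n ∈ Finset.range M, (((n : ℝ) ^ s)⁻¹ : ℝ) * χ n‖ ≤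
      ((M : ℝ) ^ s)⁻¹ * (√q * (1 + Real.log q)) := by
    intro s hs
    have := norm_hasSum_sub_sum_range_le hχ (a := fun n ↦ ((n : ℝ) ^ s)⁻¹) (M := M)
      (S := DirichletCharacter.LFunction χ s)
      (fun i j hij ↦ by
        have : (0 : ℝ) < ((M + i : ℕ) : ℝ) := by positivity
        simp only
        gcongr) (fun i ↦ by positivity) (by
        have := hasSum_iteratedDeriv_LFunction χ (MulChar.map_zero _) 0 hs
        simpa using this)
    exact this
  have hd := (DirichletCharacter.differentiable_LFunction hχ).continuous
  have hcl : Tendsto (fun s : ℝ ↦ ‖DirichletCharacter.LFunction χ s -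
      ∑ n ∈ Finset.range M, (((n : ℝ) ^ s)⁻¹ : ℝ) * χ n‖) (𝓝[>] 1)
      (𝓝 ‖DirichletCharacter.LFunction χ (1 : ℝ) -
        ∑ n ∈ Finset.range M, (((n : ℝ) ^ (1 : ℝ))⁻¹ : ℝ) * χ n‖) := by
    refine Tendsto.mono_left ?_ nhdsWithin_le_nhds
    refine Tendsto.norm (Tendsto.sub ?_ (tendsto_finsetSum _ fun n _ ↦ ?_))
    · exact (hd.comp Complex.continuous_ofReal).tendsto 1
    · refine Tendsto.mul_const _ ?_
      refine (Complex.continuous_ofReal.tendsto _).comp ?_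
      rcases Nat.eq_zero_or_pos n with rfl | hn
      · refine tendsto_const_nhds.congr' ?_
        filter_upwards [eventually_gt_nhds (zero_lt_one (α := ℝ))] with t ht
        simp [Real.zero_rpow ht.ne']
      · have hn' : (0 : ℝ) < n := by exact_mod_cast hn
        refine Tendsto.inv₀ ?_ (by positivity)
        exact (Real.continuous_const_rpow hn'.ne').tendsto 1
  have hcr : Tendsto (fun s : ℝ ↦ ((M : ℝ) ^ s)⁻¹ * (√q * (1 + Real.log q))) (𝓝[>] 1)
      (𝓝 (((M : ℝ) ^ (1 : ℝ))⁻¹ * (√q * (1 + Real.log q)))) := by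
    refine Tendsto.mono_left ?_ nhdsWithin_le_nhds
    refine Tendsto.mul_const _ (Tendsto.inv₀ ?_ (by positivity))
    exact (Real.continuous_const_rpow hM'.ne').tendsto 1
  have := le_of_tendsto_of_tendsto hcl hcr (by
    filter_upwards [self_mem_nhdsWithin] with s hs using key s hs)
  simpa using this

lemma exists_norm_riemannZeta_le : ∃ x₀ : ℝ, 0 < x₀ ∧ ∀ x : ℝ, 0 < x → x < x₀ →
    ‖riemannZeta (1 + x)‖ ≤ 2 / x := by
  have h := riemannZeta_residue_one.norm.eventually_lt_const (u := 2) (by norm_num)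
  rw [eventually_nhdsWithin_iff, Metric.eventually_nhds_iff] at h
  obtain ⟨ε, hε, h⟩ := h
  refine ⟨ε, hε, fun x hx hxε ↦ ?_⟩
  have h1 := h (y := (1 + x : ℂ)) (by simpa [dist_eq_norm, abs_of_pos hx] using hxε)
    (by simpa using hx.ne')
  simp only [add_sub_cancel_left, norm_mul, Complex.norm_real, Real.norm_of_nonneg hx.le] at h1
  rw [le_div_iff₀ hx]
  linarith

lemma norm_LFunctionTrivChar_le {q : ℕ} [Fact q.Prime] {x : ℝ} (hx : 0 < x)
    (h : ‖riemannZeta (1 + x)‖ ≤ 2 / x) :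
    ‖DirichletCharacter.LFunctionTrivChar q (1 + x)‖ ≤ 4 / x := by
  rw [DirichletCharacter.LFunctionTrivChar_eq_mul_riemannZeta (by simpa using hx.ne'),
    Nat.Prime.primeFactors (Fact.out : q.Prime), Finset.prod_singleton, norm_mul]
  have h1 : ‖(1 - (q : ℂ) ^ (-(1 + x) : ℂ))‖ ≤ 2 := by
    refine (norm_sub_le _ _).trans ?_
    rw [Complex.norm_natCast_cpow_of_pos (Fact.out : q.Prime).pos, norm_one]
    have : (q : ℝ) ^ (-(1 + x) : ℂ).re ≤ 1 :=
      Real.rpow_le_one_of_one_le_of_nonpos (by exact_mod_cast (Fact.out : q.Prime).one_le)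
        (by simp; linarith)
    linarith
  calc _ ≤ 2 * (2 / x) := by gcongr
    _ = 4 / x := by ring

/-- A lower bound near `s = 1` for `L(s, χ)` with `χ` not real. -/
lemma norm_LFunction_ge_of_sq_ne_one {q : ℕ} [Fact q.Prime] (hq : 8 ≤ q)
    {χ : DirichletCharacter ℂ q} (hχ : χ ^ 2 ≠ 1) {ℓ σ₀ : ℝ} (hℓ : ℓ = 1 + Real.log q)
    (hσ₀ : σ₀ = 1 / (2 ^ 15 * ℓ ^ 9)) (hζ : ‖riemannZeta (1 + σ₀)‖ ≤ 2 / σ₀)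
    {σ : ℝ} (h0 : 0 ≤ σ) (hσ : σ ≤ σ₀) :
    1 / (2 ^ 14 * ℓ ^ 7) ≤ ‖DirichletCharacter.LFunction χ ((1 + σ : ℝ) : ℂ)‖ := by
  have hχ1 : χ ≠ 1 := by
    rintro rfl
    simp at hχ
  have hlog : 0 ≤ Real.log q := Real.log_natCast_nonneg _
  have hℓ1 : 1 ≤ ℓ := by linarith
  have hσ₀pos : 0 < σ₀ := by
    rw [hσ₀]
    positivity
  have h341 := DirichletCharacter.norm_LFunction_product_ge_one χ hσ₀pos 0
  simp only [Complex.ofReal_zero, mul_zero, add_zero, norm_mul, norm_pow] at h341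
  have hT := norm_LFunctionTrivChar_le (q := q) hσ₀pos hζ
  have hL2 := norm_iteratedDeriv_LFunction_le hq hχ (k := 0) (by norm_num)
    (s := 1 + σ₀) (by linarith)
  simp only [iteratedDeriv_zero, zero_add, pow_one, ← hℓ] at hL2
  push_cast at hL2
  set A := ‖DirichletCharacter.LFunction χ (1 + σ₀)‖ with hA
  have hA4 : (4 * σ₀ * ℓ ^ 2) ^ 4 ≤ A ^ 4 := by
    have h1 : 1 ≤ (4 / σ₀) ^ 3 * A ^ 4 * (2 * ℓ) := by
      refine h341.le.trans ?_
      gcongr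
    have h2 : (4 / σ₀) ^ 3 * A ^ 4 * (2 * ℓ) = A ^ 4 * (128 * ℓ / σ₀ ^ 3) := by
      field_simp
      ring
    rw [h2, ← div_le_iff₀ (by positivity)] at h1
    refine le_trans (le_of_eq ?_) h1
    rw [hσ₀]
    field_simp
    norm_num
  have hA1 : 4 * σ₀ * ℓ ^ 2 ≤ A := le_of_pow_le_pow_left₀ (by norm_num) (norm_nonneg _) hA4
  have hdiff : ‖DirichletCharacter.LFunction χ ((1 + σ₀ : ℝ) : ℂ) -
      DirichletCharacter.LFunction χ ((1 + σ : ℝ) : ℂ)‖ ≤ 2 * ℓ ^ 2 * (σ₀ - σ) := by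
    have hd := DirichletCharacter.differentiable_LFunction hχ1
    have := norm_image_sub_le_of_norm_deriv_le_segment' (a := 1 + σ) (b := 1 + σ₀)
      (C := 2 * ℓ ^ 2)
      (f := fun t : ℝ ↦ DirichletCharacter.LFunction χ t)
      (f' := fun t : ℝ ↦ deriv (DirichletCharacter.LFunction χ) t)
      (fun x _ ↦ ((hd x).hasDerivAt.comp_ofReal).hasDerivWithinAt)
      (fun x hx ↦ by
        have := norm_iteratedDeriv_LFunction_le hq hχ1 (k := 1) (by norm_num) (s := x)
          (by linarith [hx.1])
        rwa [iteratedDeriv_one, ← hℓ] at this)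
      (1 + σ₀) ⟨by linarith, le_rfl⟩
    refine this.trans (le_of_eq (by ring))
  have hA' : A = ‖DirichletCharacter.LFunction χ ((1 + σ₀ : ℝ) : ℂ)‖ := by
    rw [hA]
    push_cast
    rfl
  have h3 := norm_sub_norm_le (DirichletCharacter.LFunction χ ((1 + σ₀ : ℝ) : ℂ))
    (DirichletCharacter.LFunction χ ((1 + σ : ℝ) : ℂ))
  have h4 : 2 * ℓ ^ 2 * (σ₀ - σ) ≤ 2 * ℓ ^ 2 * σ₀ := by
    gcongr
    linarith
  have h5 : 1 / (2 ^ 14 * ℓ ^ 7) = 2 * ℓ ^ 2 * σ₀ := by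
    rw [hσ₀]
    field_simp
  rw [h5]
  linarith

lemma norm_logDeriv_LFunction_sub_le {q : ℕ} [Fact q.Prime] (hq : 8 ≤ q)
    {χ : DirichletCharacter ℂ q} (hχ : χ ^ 2 ≠ 1) {ℓ σ₀ : ℝ} (hℓ : ℓ = 1 + Real.log q)
    (hσ₀ : σ₀ = 1 / (2 ^ 15 * ℓ ^ 9)) (hζ : ‖riemannZeta (1 + σ₀)‖ ≤ 2 / σ₀)
    {δ : ℝ} (h0 : 0 ≤ δ) (hδ : δ ≤ σ₀) :
    ‖deriv (DirichletCharacter.LFunction χ) ((1 + δ : ℝ) : ℂ) /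
        DirichletCharacter.LFunction χ ((1 + δ : ℝ) : ℂ) -
      deriv (DirichletCharacter.LFunction χ) 1 / DirichletCharacter.LFunction χ 1‖ ≤
      2 ^ 31 * ℓ ^ 18 * δ := by
  have hχ1 : χ ≠ 1 := by
    rintro rfl
    simp at hχ
  have hlog : 0 ≤ Real.log q := Real.log_natCast_nonneg _
  have hℓ1 : 1 ≤ ℓ := by linarith
  have hd := DirichletCharacter.differentiable_LFunction hχ1
  have hd' : Differentiable ℂ (deriv (DirichletCharacter.LFunction χ)) := hd.deriv
  set L := DirichletCharacter.LFunction χ with hL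
  have hlow : ∀ x ∈ Set.Icc (1 : ℝ) (1 + δ), 1 / (2 ^ 14 * ℓ ^ 7) ≤ ‖L x‖ := by
    intro x hx
    have := norm_LFunction_ge_of_sq_ne_one hq hχ hℓ hσ₀ hζ (σ := x - 1) (by linarith [hx.1])
      (by linarith [hx.2])
    rwa [add_sub_cancel] at this
  have hne : ∀ x ∈ Set.Icc (1 : ℝ) (1 + δ), L x ≠ 0 := by
    intro x hx
    rw [← norm_pos_iff]
    exact lt_of_lt_of_le (by positivity) (hlow x hx)
  have := norm_image_sub_le_of_norm_deriv_le_segment' (a := 1) (b := 1 + δ)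
    (C := 2 ^ 31 * ℓ ^ 18) (f := fun t : ℝ ↦ deriv L t / L t)
    (f' := fun t : ℝ ↦ (deriv (deriv L) t * L t - deriv L t * deriv L t) / L t ^ 2)
    (fun x hx ↦ (((hd' x).hasDerivAt.div (hd x).hasDerivAt (hne x hx)).comp_ofReal).hasDerivWithinAt)
    (fun x hx ↦ by
      have hx' : x ∈ Set.Icc (1 : ℝ) (1 + δ) := ⟨hx.1, hx.2.le⟩
      have h1 := norm_iteratedDeriv_LFunction_le hq hχ1 (k := 1) (by norm_num) hx.1
      have h2 := norm_iteratedDeriv_LFunction_le hq hχ1 (k := 2) (by norm_num) hx.1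
      rw [iteratedDeriv_one, ← hℓ, ← hL] at h1
      rw [iteratedDeriv_succ, iteratedDeriv_one, ← hℓ, ← hL] at h2
      have h3 := hlow x hx'
      have h4 : ‖L x‖⁻¹ ≤ 2 ^ 14 * ℓ ^ 7 := by
        rw [inv_le_comm₀ (norm_pos_iff.2 (hne x hx')) (by positivity), ← one_div]
        exact h3
      have h5 : (deriv (deriv L) x * L x - deriv L x * deriv L x) / L x ^ 2 =
          deriv (deriv L) x * (L x)⁻¹ - (deriv L x * (L x)⁻¹) ^ 2 := by
        have := hne x hx'
        field_simp
      rw [h5]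
      refine (norm_sub_le _ _).trans ?_
      rw [norm_mul, norm_pow, norm_mul, norm_inv]
      calc _ ≤ 2 * ℓ ^ 3 * (2 ^ 14 * ℓ ^ 7) + (2 * ℓ ^ 2 * (2 ^ 14 * ℓ ^ 7)) ^ 2 := by gcongr
        _ = 2 ^ 15 * ℓ ^ 10 + 2 ^ 30 * ℓ ^ 18 := by ring
        _ ≤ 2 ^ 15 * ℓ ^ 18 + 2 ^ 30 * ℓ ^ 18 := by
          gcongr
          norm_num
        _ ≤ _ := by nlinarith [pow_pos (zero_lt_one.trans_le hℓ1) 18])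
    (1 + δ) ⟨by linarith, le_rfl⟩
  simpa using this

lemma zetaMul_eq_sum_divisors {q : ℕ} (χ : DirichletCharacter ℂ q) (n : ℕ) :
    χ.zetaMul n = ∑ d ∈ n.divisors, χ (d : ZMod q) := by
  rw [DirichletCharacter.zetaMul, ArithmeticFunction.coe_zeta_mul_apply]
  refine Finset.sum_congr rfl fun d hd => ?_
  exact if_neg (Nat.pos_of_mem_divisors hd).ne'

open scoped ComplexOrder in
lemma one_le_zetaMul_sq {q : ℕ} {χ : DirichletCharacter ℂ q} (hχ : χ ^ 2 = 1) {m : ℕ}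
    (hm : m ≠ 0) : 1 ≤ χ.zetaMul (m ^ 2) := by
  rw [χ.isMultiplicative_zetaMul.multiplicative_factorization _ (pow_ne_zero 2 hm),
    Nat.factorization_pow, Finsupp.prod]
  rw [← Finset.prod_const_one (s := (2 • m.factorization).support)]
  refine Finset.prod_le_prod (fun _ _ => zero_le_one) fun p hp => ?_
  have hp' : p.Prime := by
    rw [← Nat.factorization_pow] at hp
    exact Nat.prime_of_mem_primeFactors hp
  rw [Finsupp.smul_apply, smul_eq_mul, zetaMul_eq_sum_divisors, Nat.sum_divisors_prime_pow hp']
  simp only [Nat.cast_pow, map_pow]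
  rcases MulChar.isQuadratic_iff_sq_eq_one.mpr hχ p with h | h | h
  · rw [h, Finset.sum_range_succ']
    simp
  · rw [h]
    simp only [one_pow, Finset.sum_const, Finset.card_range, nsmul_eq_mul, mul_one]
    exact_mod_cast Nat.succ_le_succ (Nat.zero_le _)
  · simp [h, neg_one_geom_sum, parity_simps]

lemma mul_pow_le_geom_sum (w : ℝ) (n : ℕ) :
    (n + 1) * w ^ n ≤ ∑ i ∈ Finset.range (n + 1), (w ^ 2) ^ i := by
  have h1 := Finset.sum_range_reflect (fun i => (w ^ 2) ^ i) (n + 1)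
  have h2 : ∑ i ∈ Finset.range (n + 1), 2 * w ^ n ≤
      ∑ i ∈ Finset.range (n + 1), ((w ^ 2) ^ i + (w ^ 2) ^ (n + 1 - 1 - i)) := by
    refine Finset.sum_le_sum fun i hi => ?_
    rw [Finset.mem_range] at hi
    have : w ^ n = w ^ i * w ^ (n - i) := by rw [← pow_add]; congr 1; omega
    rw [this, show n + 1 - 1 - i = n - i by omega, ← pow_mul, ← pow_mul, mul_comm 2 i,
      mul_comm 2 (n - i), pow_mul, pow_mul]
    nlinarith [sq_nonneg (w ^ i - w ^ (n - i))]
  rw [Finset.sum_add_distrib, h1, Finset.sum_const, Finset.card_range, nsmul_eq_mul] at h2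
  push_cast at h2
  linarith

lemma antitone_lambert_sub {z : ℝ} (h0 : 0 < z) (h1 : z < 1) :
    Antitone fun i : ℕ => 1 / (((i + 1 : ℕ) : ℝ) * (1 - z)) - z ^ (i + 1) / (1 - z ^ (i + 1)) := by
  obtain ⟨w, hw, rfl⟩ : ∃ w : ℝ, 0 < w ∧ z = w ^ 2 :=
    ⟨√z, Real.sqrt_pos.2 h0, (Real.sq_sqrt h0.le).symm⟩
  have hw1 : w < 1 := by nlinarith
  have hz : 0 < 1 - w ^ 2 := by linarith
  refine antitone_nat_of_succ_le fun n => ?_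
  set G := fun n => ∑ i ∈ Finset.range (n + 1), (w ^ 2) ^ i with hG
  have hgeom : ∀ n, 1 - (w ^ 2) ^ (n + 1) = (1 - w ^ 2) * G n := fun n => by
    rw [hG, mul_comm]; exact (geom_sum_mul_neg _ _).symm
  have hle : ∀ n : ℕ, (n + 1) * w ^ n ≤ G n := fun n => mul_pow_le_geom_sum w n
  have hpos : ∀ n : ℕ, 0 < G n := fun n => lt_of_lt_of_le (by positivity) (hle n)
  have hsucc : G (n + 1) = w ^ 2 * G n + 1 := by
    simp only [hG]
    rw [geom_sum_succ]
  rw [hgeom, hgeom]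
  have hprod : ((n : ℝ) + 1) * (n + 2) * (w ^ 2) ^ (n + 1) ≤ G n * G (n + 1) := by
    have := mul_le_mul (hle n) (hle (n + 1)) (by positivity) (hpos n).le
    refine le_trans ?_ this
    push_cast
    have e1 : (w ^ 2) ^ (n + 1) = w ^ (2 * n + 1) * w := by rw [← pow_mul]; ring
    have e2 : ((n : ℝ) + 1) * w ^ n * (((n : ℝ) + 1 + 1) * w ^ (n + 1)) =
      (n + 1) * (n + 2) * w ^ (2 * n + 1) := by ring
    rw [e1, e2]
    have : 0 < w ^ (2 * n + 1) := by positivity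
    gcongr
    nlinarith
  have hGn := hpos n
  have hGn1 := hpos (n + 1)
  have key : (w ^ 2) ^ (n + 1) / G n - (w ^ 2) ^ (n + 1 + 1) / G (n + 1) ≤
      1 / (n + 1) - 1 / (n + 2) := by
    have e1 : (w ^ 2) ^ (n + 1) / G n - (w ^ 2) ^ (n + 1 + 1) / G (n + 1) =
        (w ^ 2) ^ (n + 1) / (G n * G (n + 1)) := by
      field_simp
      rw [hsucc]; ring
    have e2 : (1 : ℝ) / (n + 1) - 1 / (n + 2) = 1 / ((n + 1) * (n + 2)) := by
      field_simp; ring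
    rw [e1, e2, div_le_div_iff₀ (by positivity) (by positivity)]
    linarith
  have e3 : ∀ m : ℕ, 1 / (((m + 1 : ℕ) : ℝ) * (1 - w ^ 2)) -
      (w ^ 2) ^ (m + 1) / ((1 - w ^ 2) * G m) =
      (1 / (m + 1) - (w ^ 2) ^ (m + 1) / G m) / (1 - w ^ 2) := by
    intro m
    have := hpos m
    push_cast
    field_simp
  rw [e3, e3]
  refine div_le_div_of_nonneg_right ?_ hz.le
  push_cast
  have : (n : ℝ) + 1 + 1 = n + 2 := by ring
  rw [this]
  linarith

lemma lambert_sub_nonneg {z : ℝ} (h0 : 0 < z) (h1 : z < 1) (i : ℕ) :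
    0 ≤ 1 / (((i + 1 : ℕ) : ℝ) * (1 - z)) - z ^ (i + 1) / (1 - z ^ (i + 1)) := by
  have hz : 0 < 1 - z := by linarith
  refine (antitone_lambert_sub h0 h1).le_of_tendsto ?_ i
  have t1 : Tendsto (fun i : ℕ => 1 / (((i + 1 : ℕ) : ℝ) * (1 - z))) atTop (𝓝 0) := by
    refine tendsto_const_nhds.div_atTop ?_
    exact (tendsto_natCast_atTop_atTop.comp (tendsto_add_atTop_nat 1)).atTop_mul_const hz
  have t2 : Tendsto (fun i : ℕ => z ^ (i + 1)) atTop (𝓝 0) :=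
    (tendsto_pow_atTop_nhds_zero_of_lt_one h0.le h1).comp (tendsto_add_atTop_nat 1)
  simpa using t1.sub (t2.div (t2.const_sub 1) (by norm_num))

section Lambert

variable {q : ℕ} (χ : DirichletCharacter ℂ q) {z : ℝ}

lemma summable_dirichletCharacter_mul_pow (h0 : 0 < z) (h1 : z < 1) :
    Summable fun c : ℕ+ × ℕ+ => χ ((c.1 : ℕ) : ZMod q) * ((z ^ (c.1 * c.2 : ℕ) : ℝ) : ℂ) := by
  have hz : ‖z‖ < 1 := by rw [Real.norm_eq_abs, abs_of_pos h0]; exact h1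
  have := summable_prod_mul_pow (𝕜 := ℝ) 0 hz
  refine Summable.of_norm_bounded this fun c => ?_
  rw [norm_mul, Complex.norm_real, Real.norm_of_nonneg (by positivity), pow_zero]
  exact mul_le_mul_of_nonneg_right (χ.norm_le_one _) (by positivity)

lemma hasSum_lambert (h0 : 0 < z) (h1 : z < 1) :
    HasSum (fun i : ℕ => ((z ^ (i + 1) / (1 - z ^ (i + 1)) : ℝ) : ℂ) * χ ((1 + i : ℕ) : ZMod q))
      (∑' c : ℕ+ × ℕ+, χ ((c.1 : ℕ) : ZMod q) * ((z ^ (c.1 * c.2 : ℕ) : ℝ) : ℂ)) := by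
  have h := (summable_dirichletCharacter_mul_pow χ h0 h1).hasSum
  have hf : ∀ d : ℕ+, HasSum (fun c : ℕ+ => χ ((d : ℕ) : ZMod q) * ((z ^ (d * c : ℕ) : ℝ) : ℂ))
      (χ ((d : ℕ) : ZMod q) * ((z ^ (d : ℕ) / (1 - z ^ (d : ℕ)) : ℝ) : ℂ)) := by
    intro d
    refine HasSum.mul_left _ ?_
    rw [Complex.hasSum_ofReal]
    have hd : z ^ (d : ℕ) < 1 := pow_lt_one₀ h0.le h1 d.ne_zero
    have := (hasSum_geometric_of_lt_one (by positivity) hd).mul_left (z ^ (d : ℕ))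
    rw [← Equiv.pnatEquivNat.hasSum_iff] at this
    refine this.congr_fun fun c => ?_
    change _ = z ^ (d : ℕ) * (z ^ (d : ℕ)) ^ c.natPred
    rw [← pow_succ', ← pow_mul, PNat.natPred_add_one]
  have h2 := h.prod_fiberwise hf
  rw [← Equiv.pnatEquivNat.symm.hasSum_iff] at h2
  convert h2 using 2 with i
  simp [Function.comp, add_comm, mul_comm]

lemma hasSum_zetaMul_mul_pow (h0 : 0 < z) (h1 : z < 1) :
    HasSum (fun n : ℕ+ => χ.zetaMul n * ((z ^ (n : ℕ) : ℝ) : ℂ))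
      (∑' c : ℕ+ × ℕ+, χ ((c.1 : ℕ) : ZMod q) * ((z ^ (c.1 * c.2 : ℕ) : ℝ) : ℂ)) := by
  have h := (summable_dirichletCharacter_mul_pow χ h0 h1).hasSum
  rw [← sigmaAntidiagonalEquivProd.hasSum_iff] at h
  have h2 := h.sigma fun n => hasSum_fintype _
  convert h2 using 2 with n
  simp only [Function.comp, sigmaAntidiagonalEquivProd, divisorsAntidiagonalFactors,
    PNat.mk_coe, Equiv.coe_fn_mk]
  rw [Finset.univ_eq_attach, (n : ℕ).divisorsAntidiagonal.sum_attach
    fun x : ℕ × ℕ => χ (x.1 : ZMod q) * ((z ^ (x.1 * x.2) : ℝ) : ℂ)]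
  rw [zetaMul_eq_sum_divisors, Finset.sum_mul,
    Nat.sum_divisorsAntidiagonal fun x y => χ (x : ZMod q) * ((z ^ (x * y) : ℝ) : ℂ)]
  refine Finset.sum_congr rfl fun i hi => ?_
  rw [Nat.mul_div_cancel' (Nat.dvd_of_mem_divisors hi)]

end Lambert

lemma re_tsum_lambert_ge {q : ℕ} {χ : DirichletCharacter ℂ q} (hχ : χ ^ 2 = 1) {z : ℝ}
    (h0 : 0 < z) (h1 : z < 1) (M : ℕ) :
    M * z ^ (M ^ 2) ≤
      (∑' c : ℕ+ × ℕ+, χ ((c.1 : ℕ) : ZMod q) * ((z ^ (c.1 * c.2 : ℕ) : ℝ) : ℂ)).re := by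
  have h := Complex.hasSum_re (hasSum_zetaMul_mul_pow χ h0 h1)
  simp only [Complex.re_mul_ofReal] at h
  have hnn : ∀ n : ℕ, 0 ≤ (χ.zetaMul n).re := fun n =>
    (Complex.le_def.1 (DirichletCharacter.zetaMul_nonneg hχ n)).1
  have hsq : ∀ m : ℕ, m ≠ 0 → 1 ≤ (χ.zetaMul (m ^ 2)).re := fun m hm =>
    (Complex.le_def.1 (one_le_zetaMul_sq hχ hm)).1
  have hinj : Function.Injective fun i : ℕ => (i.succPNat ^ 2 : ℕ+) := fun a b hab => by
    have : (a + 1) ^ 2 = (b + 1) ^ 2 := congrArg (fun x : ℕ+ => (x : ℕ)) hab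
    have := Nat.pow_left_injective two_ne_zero this
    omega
  have hle := sum_le_hasSum ((Finset.range M).map ⟨_, hinj⟩)
    (fun n _ => mul_nonneg (hnn n) (by positivity)) h
  refine le_trans ?_ hle
  rw [Finset.sum_map]
  calc (M : ℝ) * z ^ (M ^ 2) = ∑ i ∈ Finset.range M, z ^ (M ^ 2) := by simp
    _ ≤ _ := ?_
  refine Finset.sum_le_sum fun i hi => ?_
  rw [Finset.mem_range] at hi
  have e : (((⟨fun i : ℕ => (i.succPNat ^ 2 : ℕ+), hinj⟩ : ℕ ↪ ℕ+) i : ℕ+) : ℕ) = (i + 1) ^ 2 := rfl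
  rw [e]
  have h2 : z ^ (M ^ 2) ≤ z ^ ((i + 1) ^ 2) :=
    pow_le_pow_of_le_one h0.le h1.le (Nat.pow_le_pow_left hi 2)
  have := hsq (i + 1) (by omega)
  have hp : 0 < z ^ ((i + 1) ^ 2) := by positivity
  nlinarith

lemma norm_LFunction_one_div_sub_lambert_le {q : ℕ} [Fact q.Prime] {χ : DirichletCharacter ℂ q}
    (hχ : χ ≠ 1) {z : ℝ} (h0 : 0 < z) (h1 : z < 1) :
    ‖DirichletCharacter.LFunction χ 1 / ((1 - z : ℝ) : ℂ) -
      ∑' c : ℕ+ × ℕ+, χ ((c.1 : ℕ) : ZMod q) * ((z ^ (c.1 * c.2 : ℕ) : ℝ) : ℂ)‖ ≤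
      √q * (1 + Real.log q) := by
  have hz : 0 < 1 - z := by linarith
  set B := √q * (1 + Real.log q) with hB
  have hq0 : χ 0 = 0 := by
    have : Nontrivial (ZMod q) := inferInstance
    exact MulChar.map_zero χ
  have t1 : Tendsto (fun N : ℕ => ∑ n ∈ Finset.range N, ((n : ℝ)⁻¹ : ℂ) * χ (n : ZMod q)) atTop
      (𝓝 (DirichletCharacter.LFunction χ 1)) := by
    rw [tendsto_iff_norm_sub_tendsto_zero]
    have : Tendsto (fun N : ℕ => (N : ℝ)⁻¹ * B) atTop (𝓝 0) := by
      simpa using (tendsto_inv_atTop_nhds_zero_nat (𝕜 := ℝ)).mul_const B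
    refine squeeze_zero' (Eventually.of_forall fun _ => norm_nonneg _) ?_ this
    filter_upwards [eventually_gt_atTop 0] with N hN
    rw [norm_sub_rev]
    exact norm_LFunction_one_sub_sum_range_le hχ hN
  have t2 := (hasSum_lambert χ h0 h1).tendsto_sum_nat
  have t3 := ((t1.comp (tendsto_add_atTop_nat 1)).div_const ((1 - z : ℝ) : ℂ)).sub t2
  refine le_of_tendsto t3.norm (Eventually.of_forall fun N => ?_)
  have hs := norm_sum_range_mul_le_of_antitone (f := fun i => χ ((1 + i : ℕ) : ZMod q)) (B := B)
    (fun n => norm_sum_dirichletCharacter_le hχ 1 n) (antitone_lambert_sub h0 h1)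
    (lambert_sub_nonneg h0 h1) N
  have e1 : 1 / (((0 + 1 : ℕ) : ℝ) * (1 - z)) - z ^ (0 + 1) / (1 - z ^ (0 + 1)) = 1 := by
    simp only [zero_add, Nat.cast_one, one_mul, pow_one]
    rw [← sub_div, div_self hz.ne']
  rw [e1, one_mul] at hs
  refine le_trans (le_of_eq ?_) hs
  congr 1
  simp only [Function.comp]
  rw [Finset.sum_range_succ', Nat.cast_zero (R := ZMod q), hq0, mul_zero, add_zero, Finset.sum_div,
    ← Finset.sum_sub_distrib]
  refine Finset.sum_congr rfl fun i _ => ?_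
  rw [add_comm i 1]
  push_cast
  field_simp

lemma norm_LFunction_one_ge_of_sq_eq_one {q : ℕ} [Fact q.Prime] {χ : DirichletCharacter ℂ q}
    (hχ : χ ≠ 1) (hχ2 : χ ^ 2 = 1) :
    1 / (40 * (√q * (1 + Real.log q))) ≤ ‖DirichletCharacter.LFunction χ 1‖ := by
  have hq2 : (2 : ℝ) ≤ q := by exact_mod_cast (Fact.out : q.Prime).two_le
  set B := √q * (1 + Real.log q) with hB
  have hB1 : 1 ≤ B := by
    have h1 : 1 ≤ √q := Real.one_le_sqrt.2 (by linarith)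
    have h2 : 0 ≤ Real.log q := Real.log_nonneg (by linarith)
    nlinarith
  obtain ⟨M, hM1, hM2⟩ : ∃ M : ℕ, 4 * B ≤ M ∧ (M : ℝ) ≤ 5 * B :=
    ⟨⌈4 * B⌉₊, Nat.le_ceil _, by have := Nat.ceil_lt_add_one (by linarith : 0 ≤ 4 * B); linarith⟩
  have hM : (1 : ℝ) ≤ M := by linarith
  set x : ℝ := 1 / (2 * (M : ℝ) ^ 2) with hx
  have hx0 : 0 < x := by positivity
  have hx1 : x ≤ 1 / 2 := by
    rw [hx]
    apply one_div_le_one_div_of_le (by norm_num)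
    nlinarith
  have hre := re_tsum_lambert_ge hχ2 (z := 1 - x) (by linarith) (by linarith) M
  have hn := norm_LFunction_one_div_sub_lambert_le hχ (z := 1 - x) (by linarith) (by linarith)
  rw [sub_sub_cancel] at hn
  set T := ∑' c : ℕ+ × ℕ+, χ ((c.1 : ℕ) : ZMod q) * (((1 - x) ^ (c.1 * c.2 : ℕ) : ℝ) : ℂ)
  have hpow : 1 / 2 ≤ (1 - x) ^ (M ^ 2) := by
    have := one_add_mul_le_pow (a := -x) (by linarith) (M ^ 2)
    have e : ((M ^ 2 : ℕ) : ℝ) * -x = -(1 / 2) := by rw [hx]; push_cast; field_simp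
    rw [e] at this
    rw [sub_eq_add_neg]
    linarith
  have hT : M / 2 ≤ ‖T‖ := by
    refine le_trans ?_ (Complex.re_le_norm T)
    nlinarith
  have h3 : ‖T‖ ≤ ‖DirichletCharacter.LFunction χ 1 / (x : ℂ)‖ + B := by
    have := norm_sub_norm_le T (DirichletCharacter.LFunction χ 1 / (x : ℂ))
    rw [norm_sub_rev] at this
    linarith
  rw [norm_div, Complex.norm_real, Real.norm_of_nonneg hx0.le] at h3
  have h4 : M / 4 * x ≤ ‖DirichletCharacter.LFunction χ 1‖ := by
    rw [← le_div_iff₀ hx0]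
    linarith
  refine le_trans ?_ h4
  have : (M : ℝ) / 4 * x = 1 / (8 * M) := by rw [hx]; field_simp; norm_num
  rw [this]
  apply one_div_le_one_div_of_le (by positivity)
  linarith

/-- The Dirichlet characters modulo `q` that are trivial on the `m`-th roots of unity. -/
noncomputable def charsTrivialOn (q m : ℕ) [NeZero q] : Finset (DirichletCharacter ℂ q) :=
  (Set.toFinite {χ : DirichletCharacter ℂ q | ∀ a : ZMod q, a ^ m = 1 → χ a = 1}).toFinset

lemma mem_charsTrivialOn {q m : ℕ} [NeZero q] {χ : DirichletCharacter ℂ q} :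
    χ ∈ charsTrivialOn q m ↔ ∀ a : ZMod q, a ^ m = 1 → χ a = 1 := by
  simp [charsTrivialOn]

lemma one_mem_charsTrivialOn {q m : ℕ} [NeZero q] (hm : m ≠ 0) :
    1 ∈ charsTrivialOn q m :=
  mem_charsTrivialOn.2 fun _ ha => MulChar.one_apply (IsUnit.of_pow_eq_one ha hm)

lemma sum_charsTrivialOn_apply {q m : ℕ} [Fact q.Prime] (hm : m ≠ 0) (a : ZMod q) :
    ∑ χ ∈ charsTrivialOn q m, χ a = if a ^ m = 1 then ((charsTrivialOn q m).card : ℂ) else 0 := by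
  split_ifs with ha
  · rw [Finset.sum_congr rfl fun χ hχ => mem_charsTrivialOn.1 hχ a ha]
    simp
  · rcases eq_or_ne a 0 with rfl | ha0
    · exact Finset.sum_eq_zero fun χ _ => MulChar.map_zero χ
    · obtain ⟨ψ, hψ⟩ :=
        DirichletCharacter.exists_apply_ne_one_of_hasEnoughRootsOfUnity ℂ (n := q) ha
      have hmul : ∀ χ, χ ∈ charsTrivialOn q m ↔ ψ ^ m * χ ∈ charsTrivialOn q m := by
        intro χ
        rw [mem_charsTrivialOn, mem_charsTrivialOn]
        refine forall₂_congr fun b hb => ?_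
        rw [MulChar.mul_apply, MulChar.pow_apply' _ hm, ← map_pow, hb, map_one, one_mul]
      have hperm : ∑ χ ∈ charsTrivialOn q m, χ a =
          ∑ χ ∈ charsTrivialOn q m, (ψ ^ m * χ) a := by
        refine (Finset.sum_equiv (Equiv.mulLeft (ψ ^ m)) (fun χ => ?_) fun χ _ => ?_).symm
        · exact hmul χ
        · rfl
      have hsub : (ψ (a ^ m) - 1) * ∑ χ ∈ charsTrivialOn q m, χ a = 0 := by
        rw [sub_mul, one_mul, Finset.mul_sum, sub_eq_zero]
        conv_rhs => rw [hperm]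
        refine Finset.sum_congr rfl fun χ _ => ?_
        rw [MulChar.mul_apply, MulChar.pow_apply' _ hm, map_pow]
      exact (mul_eq_zero.1 hsub).resolve_left (sub_ne_zero.2 hψ)

lemma card_filter_pow_eq_one {q m : ℕ} [Fact q.Prime] (hm : m ∣ q - 1) :
    (Finset.univ.filter fun a : ZMod q => a ^ m = 1).card = m := by
  have hq1 : 0 < q - 1 := Nat.sub_pos_of_lt (Fact.out : q.Prime).one_lt
  have hm0 : 0 < m := Nat.pos_of_dvd_of_pos hm hq1
  obtain ⟨g, hg⟩ := IsCyclic.exists_ofOrder_eq_natCard (α := (ZMod q)ˣ)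
  rw [Nat.card_eq_fintype_card, ZMod.card_units] at hg
  have hprim : IsPrimitiveRoot (g : ZMod q) (q - 1) := by
    rw [← hg, IsPrimitiveRoot.coe_units_iff]
    exact IsPrimitiveRoot.orderOf g
  obtain ⟨e, he⟩ := hm
  have hprim' : IsPrimitiveRoot ((g : ZMod q) ^ e) m := hprim.pow hq1 (by rw [he, mul_comm])
  have := hprim'.card_nthRootsFinset
  convert this using 2
  ext a
  simp [Polynomial.mem_nthRootsFinset hm0]

lemma card_charsTrivialOn_mul {q m : ℕ} [Fact q.Prime] (hm : m ∣ q - 1) :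
    (charsTrivialOn q m).card * m = q - 1 := by
  have hq1 : 0 < q - 1 := Nat.sub_pos_of_lt (Fact.out : q.Prime).one_lt
  have hm0 : m ≠ 0 := (Nat.pos_of_dvd_of_pos hm hq1).ne'
  have h1 : ∑ a : ZMod q, ∑ χ ∈ charsTrivialOn q m, χ a = (charsTrivialOn q m).card * m := by
    simp_rw [sum_charsTrivialOn_apply hm0]
    rw [← Finset.sum_filter, Finset.sum_const, card_filter_pow_eq_one hm, nsmul_eq_mul, mul_comm]
  rw [Finset.sum_comm, Finset.sum_eq_single (1 : DirichletCharacter ℂ q)] at h1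
  · rw [MulChar.sum_one_eq_card_units, ZMod.card_units] at h1
    exact_mod_cast h1.symm
  · intro χ _ hχ
    exact MulChar.sum_eq_zero_of_ne_one hχ
  · intro h
    exact absurd (one_mem_charsTrivialOn hm0) h

lemma card_filter_sq_eq_one_le (q : ℕ) [Fact q.Prime] {s : Finset (DirichletCharacter ℂ q)}
    (hs : ∀ χ ∈ s, χ ≠ 1 ∧ χ ^ 2 = 1) : s.card ≤ 1 := by
  classical
  obtain ⟨e⟩ := DirichletCharacter.mulEquiv_units ℂ q
  rw [Finset.card_le_one]
  have key : ∀ χ ∈ s, ((e χ : (ZMod q)ˣ) : ZMod q) = -1 := by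
    intro χ hχ
    obtain ⟨h1, h2⟩ := hs χ hχ
    have h3 : ((e χ : (ZMod q)ˣ) : ZMod q) * (e χ : (ZMod q)ˣ) = 1 := by
      rw [← pow_two, ← Units.val_pow_eq_pow_val, ← map_pow, h2, map_one, Units.val_one]
    rcases mul_self_eq_one_iff.1 h3 with h | h
    · exact absurd (e.map_eq_one_iff.1 (Units.ext h)) h1
    · exact h
  intro χ hχ ψ hψ
  exact e.injective (Units.ext ((key χ hχ).trans (key ψ hψ).symm))

lemma hasSum_neg_logDeriv_LFunction {q : ℕ} [NeZero q] (χ : DirichletCharacter ℂ q) {s : ℝ}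
    (hs : 1 < s) :
    HasSum (fun n : ℕ => χ n * ((ArithmeticFunction.vonMangoldt n / (n : ℝ) ^ s : ℝ) : ℂ))
      (-deriv (DirichletCharacter.LFunction χ) s / DirichletCharacter.LFunction χ s) := by
  have hs' : 1 < (s : ℂ).re := by simpa using hs
  have h := (DirichletCharacter.LSeriesSummable_twist_vonMangoldt χ hs').LSeriesHasSum
  rw [DirichletCharacter.LSeries_twist_vonMangoldt_eq χ hs',
    ← DirichletCharacter.deriv_LFunction_eq_deriv_LSeries χ hs',
    ← DirichletCharacter.LFunction_eq_LSeries χ hs'] at h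
  refine h.congr_fun fun n => ?_
  rcases eq_or_ne n 0 with rfl | hn
  · simp
  · rw [LSeries.term_of_ne_zero hn, Complex.ofReal_div, Complex.ofReal_cpow (Nat.cast_nonneg n)]
    simp [mul_div_assoc]

lemma hasSum_neg_logDeriv_riemannZeta {s : ℝ} (hs : 1 < s) :
    HasSum (fun n : ℕ => ((ArithmeticFunction.vonMangoldt n / (n : ℝ) ^ s : ℝ) : ℂ))
      (-deriv riemannZeta s / riemannZeta s) := by
  have h := hasSum_neg_logDeriv_LFunction (1 : DirichletCharacter ℂ 1) hs
  rw [DirichletCharacter.LFunction_modOne_eq] at h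
  refine h.congr_fun fun n => ?_
  rw [Subsingleton.elim (n : ZMod 1) 1, map_one, one_mul]

lemma exists_norm_logDeriv_riemannZeta_le : ∃ x₀ : ℝ, 0 < x₀ ∧ ∀ x : ℝ, 0 < x → x < x₀ →
    ‖-deriv riemannZeta ((1 + x : ℝ) : ℂ) / riemannZeta ((1 + x : ℝ) : ℂ)‖ ≤ 2 / x := by
  have hc := DirichletCharacter.continuousOn_neg_logDeriv_LFunctionTrivChar₁ 1
  have hsub : Set.Ici (1 : ℝ) ⊆ (fun t : ℝ => (t : ℂ)) ⁻¹'
      {s | s = 1 ∨ DirichletCharacter.LFunctionTrivChar 1 s ≠ 0} := by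
    intro t ht
    rcases eq_or_lt_of_le (Set.mem_Ici.1 ht) with rfl | h
    · left; simp
    · right
      exact DirichletCharacter.LFunction_ne_zero_of_one_le_re _ (.inr (by
        rw [← Complex.ofReal_one, Ne, Complex.ofReal_inj]; exact h.ne')) (by simpa using h.le)
  have hc2 := hc.comp Complex.continuous_ofReal.continuousOn hsub
  have hc3 := (hc2.norm 1 (Set.mem_Ici.2 le_rfl)).mono_left
    (nhdsWithin_mono _ Set.Ioi_subset_Ici_self)
  set C := ‖-deriv (DirichletCharacter.LFunctionTrivChar₁ 1) ((1 : ℝ) : ℂ) /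
    DirichletCharacter.LFunctionTrivChar₁ 1 ((1 : ℝ) : ℂ)‖ with hC
  have hev := hc3.eventually_lt_const (lt_add_one C)
  rw [eventually_nhdsWithin_iff, Metric.eventually_nhds_iff] at hev
  obtain ⟨e, he, hev⟩ := hev
  have hC0 : 0 ≤ C := norm_nonneg _
  refine ⟨min e (1 / (C + 1)), by positivity, fun x hx hx2 => ?_⟩
  have hb := hev (y := 1 + x) (by simpa [abs_of_pos hx] using hx2.trans_le (min_le_left _ _))
    (by simpa using hx)
  have hne : ((1 + x : ℝ) : ℂ) ≠ 1 := by
    rw [← Complex.ofReal_one, Ne, Complex.ofReal_inj]; linarith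
  simp only [Function.comp] at hb
  rw [DirichletCharacter.deriv_LFunctionTrivChar₁_apply_of_ne_one _ hne,
    DirichletCharacter.LFunctionTrivChar₁, Function.update_of_ne hne,
    DirichletCharacter.LFunctionTrivChar, DirichletCharacter.LFunction_modOne_eq] at hb
  have hz : riemannZeta ((1 + x : ℝ) : ℂ) ≠ 0 :=
    riemannZeta_ne_zero_of_one_le_re (by simp [hx.le])
  have hx' : (x : ℂ) ≠ 0 := by exact_mod_cast hx.ne'
  have e1 : ((1 + x : ℝ) : ℂ) - 1 = x := by push_cast; ring
  rw [e1] at hb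
  set Z := riemannZeta ((1 + x : ℝ) : ℂ)
  set D := deriv riemannZeta ((1 + x : ℝ) : ℂ)
  have e2 : -D / Z = -(x * D + Z) / (x * Z) + 1 / x := by
    field_simp
    ring
  rw [e2]
  have h4 : ‖(1 : ℂ) / x‖ = 1 / x := by
    rw [norm_div, norm_one, Complex.norm_real, Real.norm_of_nonneg hx.le]
  have h5 : C + 1 ≤ 1 / x := by
    rw [le_div_iff₀ hx, mul_comm, ← le_div_iff₀ (by positivity)]
    exact hx2.le.trans (min_le_right _ _)
  calc _ ≤ ‖-(x * D + Z) / (x * Z)‖ + ‖(1 : ℂ) / x‖ := norm_add_le _ _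
    _ ≤ 1 / x + 1 / x := by rw [h4]; linarith
    _ = 2 / x := by ring

lemma norm_neg_logDeriv_LFunction_le {q : ℕ} [NeZero q] (χ : DirichletCharacter ℂ q) {s : ℝ}
    (hs : 1 < s) :
    ‖deriv (DirichletCharacter.LFunction χ) s / DirichletCharacter.LFunction χ s‖ ≤
      ‖-deriv riemannZeta s / riemannZeta s‖ := by
  have h1 := hasSum_neg_logDeriv_LFunction χ hs
  have h2 := hasSum_neg_logDeriv_riemannZeta hs
  have h3 := Complex.hasSum_re h2
  simp only [Complex.ofReal_re] at h3
  rw [← norm_neg, ← neg_div, ← h1.tsum_eq]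
  refine le_trans ?_ (Complex.re_le_norm _)
  refine tsum_of_norm_bounded h3 fun n => ?_
  have : 0 ≤ ArithmeticFunction.vonMangoldt n / (n : ℝ) ^ s :=
    div_nonneg ArithmeticFunction.vonMangoldt_nonneg (by positivity)
  rw [norm_mul, Complex.norm_real, Real.norm_of_nonneg this]
  exact mul_le_of_le_one_left this (χ.norm_le_one _)

lemma re_two_mul_sum_logDeriv_sub_le {q r : ℕ} [Fact q.Prime] (hr : 2 * r ∣ q - 1) {s : ℝ}
    (hs : 1 < s) :
    (2 * ∑ χ ∈ charsTrivialOn q (2 * r),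
        deriv (DirichletCharacter.LFunction χ) s / DirichletCharacter.LFunction χ s -
      ∑ χ ∈ charsTrivialOn q r,
        deriv (DirichletCharacter.LFunction χ) s / DirichletCharacter.LFunction χ s).re ≤ 0 := by
  have hq1 : 0 < q - 1 := Nat.sub_pos_of_lt (Fact.out : q.Prime).one_lt
  have h2r0 : 2 * r ≠ 0 := (Nat.pos_of_dvd_of_pos hr hq1).ne'
  have hr0 : r ≠ 0 := by omega
  have hcard : (charsTrivialOn q r).card = 2 * (charsTrivialOn q (2 * r)).card := by
    have h1 := card_charsTrivialOn_mul (q := q) hr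
    have h2 := card_charsTrivialOn_mul (q := q) (Dvd.dvd.trans (Dvd.intro_left 2 rfl) hr)
    apply Nat.eq_of_mul_eq_mul_right (Nat.pos_of_ne_zero hr0)
    rw [h2, ← h1]; ring
  have hsum : ∀ m : ℕ, m ≠ 0 → HasSum (fun n : ℕ =>
      (if (n : ZMod q) ^ m = 1 then ((charsTrivialOn q m).card : ℂ) else 0) *
        ((ArithmeticFunction.vonMangoldt n / (n : ℝ) ^ s : ℝ) : ℂ))
      (-∑ χ ∈ charsTrivialOn q m,
        deriv (DirichletCharacter.LFunction χ) s / DirichletCharacter.LFunction χ s) := by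
    intro m hm
    have := hasSum_sum (s := charsTrivialOn q m) fun χ _ => hasSum_neg_logDeriv_LFunction χ hs
    simp only [neg_div, Finset.sum_neg_distrib, ← Finset.sum_mul, sum_charsTrivialOn_apply hm]
      at this
    exact this
  have h := Complex.hasSum_re (((hsum _ h2r0).mul_left 2).sub (hsum _ hr0))
  have hnn := h.nonneg fun n => ?_
  · rw [show ∀ A B : ℂ, 2 * -A - -B = -(2 * A - B) from fun A B => by ring, Complex.neg_re] at hnn
    linarith
  · have hw : 0 ≤ ArithmeticFunction.vonMangoldt n / (n : ℝ) ^ s :=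
      div_nonneg ArithmeticFunction.vonMangoldt_nonneg (by positivity)
    rw [← mul_assoc, ← sub_mul, Complex.re_mul_ofReal]
    refine mul_nonneg ?_ hw
    rw [hcard]
    by_cases h1 : (n : ZMod q) ^ r = 1
    · have h2 : (n : ZMod q) ^ (2 * r) = 1 := by rw [mul_comm, pow_mul, h1, one_pow]
      simp [h1, h2]
    · rw [if_neg h1]
      split_ifs <;> simp

lemma gammaK_eq_sum {q m : ℕ} [NeZero q] (hm : m ≠ 0) :
    gammaK q m = Real.eulerMascheroniConstant +
      (∑ χ ∈ charsTrivialOn q m, deriv (DirichletCharacter.LFunction χ) 1 /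
        DirichletCharacter.LFunction χ 1 - deriv (DirichletCharacter.LFunction (1 :
          DirichletCharacter ℂ q)) 1 / DirichletCharacter.LFunction (1 :
          DirichletCharacter ℂ q) 1).re := by
  classical
  have hL : ∀ χ : DirichletCharacter ℂ q, Lfun χ = DirichletCharacter.LFunction χ := by
    intro χ
    funext s
    rw [Lfun, dif_neg (NeZero.ne q)]
  have hset : {χ : DirichletCharacter ℂ q | χ ≠ 1 ∧ ∀ a : ZMod q, a ^ m = 1 → χ a = 1} =
      ((charsTrivialOn q m).erase 1 : Finset (DirichletCharacter ℂ q)) := by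
    ext χ
    simp [mem_charsTrivialOn, and_comm]
  rw [gammaK, hset, finsum_mem_coe_finset, ← Finset.sum_erase_eq_sub (one_mem_charsTrivialOn hm)]
  simp only [hL]

lemma norm_logDeriv_LFunction_one_le_of_sq_eq_one {q : ℕ} [Fact q.Prime] (hq : 8 ≤ q)
    {χ : DirichletCharacter ℂ q} (hχ : χ ≠ 1) (hχ2 : χ ^ 2 = 1) :
    ‖deriv (DirichletCharacter.LFunction χ) 1 / DirichletCharacter.LFunction χ 1‖ ≤
      80 * √q * (1 + Real.log q) ^ 3 := by
  have hq8 : (8 : ℝ) ≤ q := by exact_mod_cast hq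
  have hlog : 0 ≤ Real.log q := Real.log_nonneg (by linarith)
  have hsq : 0 < √(q : ℝ) := Real.sqrt_pos.2 (by linarith)
  have h1 := norm_LFunction_one_ge_of_sq_eq_one hχ hχ2
  have h2 := norm_iteratedDeriv_LFunction_le hq hχ (k := 1) (by norm_num) (s := 1) le_rfl
  rw [iteratedDeriv_one, Complex.ofReal_one] at h2
  set ℓ := 1 + Real.log q
  have hℓ : 0 < ℓ := by positivity
  have h0 : 0 < ‖DirichletCharacter.LFunction χ 1‖ := lt_of_lt_of_le (by positivity) h1
  rw [norm_div, div_le_iff₀ h0]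
  refine h2.trans ?_
  calc 2 * ℓ ^ (1 + 1) = 80 * √q * ℓ ^ 3 * (1 / (40 * (√q * ℓ))) := by field_simp; ring
    _ ≤ _ := by gcongr

lemma norm_sum_charsTrivialOn_sub_le {q m : ℕ} [Fact q.Prime] (hm : m ≠ 0)
    {F : DirichletCharacter ℂ q → ℂ} {a b : ℝ} (ha : 0 ≤ a) (hb : 0 ≤ b)
    (h1 : ∀ χ, χ ^ 2 ≠ 1 → ‖F χ‖ ≤ a) (h2 : ∀ χ, χ ≠ 1 → χ ^ 2 = 1 → ‖F χ‖ ≤ b) :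
    ‖∑ χ ∈ charsTrivialOn q m, F χ - F 1‖ ≤ (charsTrivialOn q m).card * a + b := by
  classical
  rw [← Finset.sum_erase_eq_sub (one_mem_charsTrivialOn hm)]
  have hle : ∀ χ ∈ (charsTrivialOn q m).erase 1, ‖F χ‖ ≤ a + if χ ^ 2 = 1 then b else 0 := by
    intro χ hχ
    split_ifs with h
    · linarith [h2 χ (Finset.ne_of_mem_erase hχ) h]
    · linarith [h1 χ h]
  refine (norm_sum_le_of_le _ hle).trans ?_
  rw [Finset.sum_add_distrib, ← Finset.sum_filter, Finset.sum_const, Finset.sum_const,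
    nsmul_eq_mul, nsmul_eq_mul]
  have hc1 : (((charsTrivialOn q m).erase 1).card : ℝ) ≤ (charsTrivialOn q m).card := by
    exact_mod_cast Finset.card_erase_le
  have hc2 : ((((charsTrivialOn q m).erase 1).filter fun χ => χ ^ 2 = 1).card : ℝ) ≤ 1 := by
    exact_mod_cast card_filter_sq_eq_one_le q fun χ hχ =>
      ⟨Finset.ne_of_mem_erase (Finset.mem_filter.1 hχ).1, (Finset.mem_filter.1 hχ).2⟩
  have := mul_le_mul_of_nonneg_right hc1 ha
  have := mul_le_mul_of_nonneg_right hc2 hb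
  linarith

lemma two_mul_gammaK_sub_le {q r : ℕ} [Fact q.Prime] (hq : 8 ≤ q) (hr : 2 * r ∣ q - 1)
    {δ ℓ σ₀ : ℝ} (hℓ : ℓ = 1 + Real.log q) (hσ₀ : σ₀ = 1 / (2 ^ 15 * ℓ ^ 9))
    (hζ : ‖riemannZeta (1 + σ₀)‖ ≤ 2 / σ₀) (h0 : 0 < δ) (hδ : δ ≤ σ₀)
    (hΛ : ‖-deriv riemannZeta ((1 + δ : ℝ) : ℂ) / riemannZeta ((1 + δ : ℝ) : ℂ)‖ ≤ 2 / δ) :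
    2 * gammaK q (2 * r) - gammaK q r ≤
      1 + 8 / δ + 2 ^ 32 * ℓ ^ 18 * δ * (((q : ℝ) - 1) / r) + 240 * √q * ℓ ^ 3 := by
  have hq1 : 0 < q - 1 := by omega
  have h2r0 : 2 * r ≠ 0 := (Nat.pos_of_dvd_of_pos hr hq1).ne'
  have hr0 : r ≠ 0 := by omega
  have hq8 : (8 : ℝ) ≤ q := by exact_mod_cast hq
  have hlog : 0 ≤ Real.log q := Real.log_nonneg (by linarith)
  have hℓ0 : 0 < ℓ := by rw [hℓ]; positivity
  rw [gammaK_eq_sum h2r0, gammaK_eq_sum hr0]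
  set D : DirichletCharacter ℂ q → ℂ := fun χ =>
    deriv (DirichletCharacter.LFunction χ) 1 / DirichletCharacter.LFunction χ 1 with hD
  set E : DirichletCharacter ℂ q → ℂ := fun χ =>
    deriv (DirichletCharacter.LFunction χ) ((1 + δ : ℝ) : ℂ) /
      DirichletCharacter.LFunction χ ((1 + δ : ℝ) : ℂ) with hE
  have hEle : ∀ χ, ‖E χ‖ ≤ 2 / δ := fun χ =>
    (norm_neg_logDeriv_LFunction_le χ (by linarith)).trans hΛ
  have hre : (2 * ∑ χ ∈ charsTrivialOn q (2 * r), E χ - ∑ χ ∈ charsTrivialOn q r, E χ).re ≤ 0 :=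
    re_two_mul_sum_logDeriv_sub_le hr (by linarith)
  have ha : ∀ χ : DirichletCharacter ℂ q, χ ^ 2 ≠ 1 → ‖D χ - E χ‖ ≤ 2 ^ 31 * ℓ ^ 18 * δ := by
    intro χ hχ
    rw [norm_sub_rev]
    exact norm_logDeriv_LFunction_sub_le hq hχ hℓ hσ₀ hζ h0.le hδ
  have hb : ∀ χ : DirichletCharacter ℂ q, χ ≠ 1 → χ ^ 2 = 1 →
      ‖D χ - E χ‖ ≤ 80 * √q * ℓ ^ 3 + 2 / δ := by
    intro χ hχ hχ2
    have := norm_logDeriv_LFunction_one_le_of_sq_eq_one hq hχ hχ2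
    rw [← hℓ] at this
    exact (norm_sub_le _ _).trans (add_le_add this (hEle χ))
  have hcard : ∀ m : ℕ, m ∣ q - 1 → ((charsTrivialOn q m).card : ℝ) * m = q - 1 := by
    intro m hm
    have := card_charsTrivialOn_mul hm
    have hc : ((q - 1 : ℕ) : ℝ) = q - 1 := by
      rw [Nat.cast_sub (by omega), Nat.cast_one]
    rw [← hc, ← this, Nat.cast_mul]
  have hr' : (0 : ℝ) < r := by exact_mod_cast Nat.pos_of_ne_zero hr0
  have hc1 : ((charsTrivialOn q r).card : ℝ) = (q - 1) / r := by
    rw [eq_div_iff hr'.ne']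
    exact hcard r (Dvd.dvd.trans (Dvd.intro_left 2 rfl) hr)
  have hc2 : 2 * ((charsTrivialOn q (2 * r)).card : ℝ) = (q - 1) / r := by
    rw [eq_div_iff hr'.ne', ← hcard _ hr]
    push_cast
    ring
  have hA := norm_sum_charsTrivialOn_sub_le (F := fun χ => D χ - E χ) h2r0
    (by positivity : 0 ≤ 2 ^ 31 * ℓ ^ 18 * δ) (by positivity) ha hb
  have hB := norm_sum_charsTrivialOn_sub_le (F := fun χ => D χ - E χ) hr0
    (by positivity : 0 ≤ 2 ^ 31 * ℓ ^ 18 * δ) (by positivity) ha hb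
  rw [Finset.sum_sub_distrib] at hA hB
  have hA' := (Complex.re_le_norm _).trans hA
  have hB' := (neg_le_abs _).trans ((Complex.abs_re_le_norm _).trans hB)
  have hE1 := (neg_le_abs _).trans ((Complex.abs_re_le_norm _).trans (hEle 1))
  have hγ := Real.eulerMascheroniConstant_lt_two_thirds
  rw [hc1] at hB'
  simp only [Complex.sub_re, Complex.mul_re, Complex.re_ofNat, Complex.im_ofNat, zero_mul,
    sub_zero] at hA' hB' hre ⊢
  set h := ((q : ℝ) - 1) / r
  have e1 : 2 * (((charsTrivialOn q (2 * r)).card : ℝ) * (2 ^ 31 * ℓ ^ 18 * δ)) =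
      h * (2 ^ 31 * ℓ ^ 18 * δ) := by rw [← hc2]; ring
  have e2 : (8 : ℝ) / δ = 4 * (2 / δ) := by ring
  rw [e2]
  have e3 : 2 ^ 32 * ℓ ^ 18 * δ * h = 2 * (h * (2 ^ 31 * ℓ ^ 18 * δ)) := by ring
  rw [e3]
  have e4 : 240 * √(q : ℝ) * ℓ ^ 3 = 3 * (80 * √q * ℓ ^ 3) := by ring
  rw [e4]
  linarith

lemma eventually_one_add_log_pow_le {η : ℝ} (hη : 0 < η) :
    ∀ᶠ x : ℝ in atTop, (1 + Real.log x) ^ 20 ≤ η * √x := by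
  have h := (Real.isLittleO_pow_log_id_atTop (n := 40)).bound
    (show 0 < (η / 2 ^ 20) ^ 2 by positivity)
  filter_upwards [h, eventually_ge_atTop (Real.exp 1)] with x hx hxe
  have hx0 : 0 < x := (Real.exp_pos 1).trans_le hxe
  have hl : 1 ≤ Real.log x := (Real.le_log_iff_exp_le hx0).2 hxe
  rw [Real.norm_of_nonneg (by positivity), id, Real.norm_of_nonneg hx0.le] at hx
  have h1 : Real.log x ^ 20 ≤ η / 2 ^ 20 * √x := by
    refine le_of_pow_le_pow_left₀ two_ne_zero (by positivity) ?_
    rw [mul_pow, Real.sq_sqrt hx0.le, ← pow_mul]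
    exact hx
  calc (1 + Real.log x) ^ 20 ≤ (2 * Real.log x) ^ 20 := by gcongr; linarith
    _ = 2 ^ 20 * Real.log x ^ 20 := by rw [mul_pow]
    _ ≤ 2 ^ 20 * (η / 2 ^ 20 * √x) := by gcongr
    _ = η * √x := by ring

set_option maxHeartbeats 800000 in
lemma exists_two_mul_gammaK_sub_le {ε : ℝ} (hε : 0 < ε) : ∃ Q : ℝ, ∀ q r : ℕ, q.Prime → Q ≤ q →
    0 < r → (r : ℝ) ≤ Real.log q → 2 * r ∣ q - 1 →
    2 * gammaK q (2 * r) - gammaK q r ≤ ε * (((q : ℝ) - 1) / r) ∧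
      Real.log q / ((q : ℝ) - 1) ≤ ε := by
  obtain ⟨x₁, hx₁, hζ⟩ := exists_norm_riemannZeta_le
  obtain ⟨x₂, hx₂, hΛ⟩ := exists_norm_logDeriv_riemannZeta_le
  set K : ℝ := 32 / ε with hK
  have hK0 : 0 < K := by positivity
  obtain ⟨η, hη, hη1, hη2, hη3, hη4⟩ : ∃ η : ℝ, 0 < η ∧ 2 ^ 16 * K * η ≤ 1 ∧ 2 * K * η < x₂ ∧
      (241 + 2 ^ 32 * K) * η ≤ ε / 4 ∧ 2 * η ≤ ε := by
    have hc : ∀ c : ℝ, Tendsto (fun η : ℝ => c * η) (𝓝[>] 0) (𝓝 0) := fun c => by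
      have : Tendsto (fun η : ℝ => c * η) (𝓝 0) (𝓝 (c * 0)) := tendsto_id.const_mul c
      rw [mul_zero] at this
      exact this.mono_left nhdsWithin_le_nhds
    have := ((((hc (2 ^ 16 * K)).eventually_lt_const one_pos).and
      ((hc (2 * K)).eventually_lt_const hx₂)).and
      ((hc (241 + 2 ^ 32 * K)).eventually_lt_const (show 0 < ε / 4 by positivity))).and
      ((hc 2).eventually_lt_const hε)
    obtain ⟨η, ⟨⟨⟨h1, h2⟩, h3⟩, h4⟩, h0⟩ := (this.and self_mem_nhdsWithin).exists
    exact ⟨η, h0, h1.le, h2, h3.le, h4.le⟩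
  obtain ⟨Q, hQ⟩ := eventually_atTop.1 (((eventually_one_add_log_pow_le hη).and
    (eventually_ge_atTop 8)).and (Real.tendsto_log_atTop.eventually_gt_atTop (1 / x₁)))
  refine ⟨Q, fun q r hq hQq hr hrq hdvd => ?_⟩
  have : Fact q.Prime := ⟨hq⟩
  obtain ⟨⟨hη20, hq8⟩, hx₁q⟩ := hQ q hQq
  set ℓ := 1 + Real.log q with hℓ
  have hr1 : (1 : ℝ) ≤ r := by exact_mod_cast hr
  have hℓ2 : 2 ≤ ℓ := by linarith
  have hℓ0 : 0 < ℓ := by linarith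
  have hs : √(q : ℝ) * √q = q := Real.mul_self_sqrt (by positivity)
  have hs1 : 1 ≤ √(q : ℝ) := Real.one_le_sqrt.2 (by linarith)
  have hpow : ∀ n ≤ 20, ℓ ^ n ≤ ℓ ^ 20 := fun n hn => pow_le_pow_right₀ (by linarith) hn
  set h := ((q : ℝ) - 1) / r with hh
  have hhq : (q : ℝ) ≤ 2 * ℓ * h := by
    have : ℓ * h = ((q : ℝ) - 1) * (ℓ / r) := by rw [hh]; ring
    have h1 : 1 ≤ ℓ / r := by rw [one_le_div (by linarith)]; linarith
    nlinarith
  have hh0 : 0 < h := div_pos (by linarith) (by linarith)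
  constructor
  · set σ₀ : ℝ := 1 / (2 ^ 15 * ℓ ^ 9) with hσ
    set δ := K / h with hδ
    have hσx : σ₀ < x₁ := by
      have h1 : 1 / x₁ < ℓ := by linarith
      have h2 : ℓ ≤ 2 ^ 15 * ℓ ^ 9 := by
        have : ℓ ≤ ℓ ^ 9 := le_self_pow₀ (by linarith) (by norm_num)
        nlinarith
      rw [hσ, div_lt_comm₀ (by positivity) hx₁]
      linarith
    have hδq : δ * q ≤ 2 * K * ℓ := by
      rw [hδ, div_mul_eq_mul_div, div_le_iff₀ hh0]
      nlinarith
    have hδ0 : 0 < δ := by positivity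
    have hδ10 : δ * ℓ ^ 9 ≤ 2 * K * η := by
      have h1 : δ * ℓ ^ 9 * q ≤ 2 * K * η * q := by
        calc δ * ℓ ^ 9 * q = δ * q * ℓ ^ 9 := by ring
          _ ≤ 2 * K * ℓ * ℓ ^ 9 := by gcongr
          _ = 2 * K * ℓ ^ 10 := by ring
          _ ≤ 2 * K * (η * √q) := by
            gcongr; exact (hpow 10 (by norm_num)).trans hη20
          _ ≤ 2 * K * (η * q) := by
            gcongr; nlinarith
          _ = _ := by ring
      exact le_of_mul_le_mul_right h1 (by linarith)
    have hδσ : δ ≤ σ₀ := by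
      rw [hσ, le_div_iff₀ (by positivity)]
      linarith
    have hδx : δ < x₂ := by
      have : (1 : ℝ) ≤ ℓ ^ 9 := one_le_pow₀ (by linarith)
      nlinarith
    have hmain := two_mul_gammaK_sub_le (q := q) (r := r) (by exact_mod_cast hq8) hdvd hℓ hσ
      (hζ σ₀ (by positivity) hσx) hδ0 hδσ (hΛ δ hδ0 hδx)
    rw [← hh] at hmain
    refine hmain.trans ?_
    have e1 : 8 / δ = ε / 4 * h := by
      rw [hδ, hK]; field_simp; norm_num
    have e2 : δ * h = K := by rw [hδ]; field_simp
    have e3 : 1 + 2 ^ 32 * ℓ ^ 18 * δ * h + 240 * √q * ℓ ^ 3 ≤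
        (241 + 2 ^ 32 * K) * (√q * ℓ ^ 18) := by
      have h1 : (1 : ℝ) ≤ √q * ℓ ^ 18 := one_le_mul_of_one_le_of_one_le hs1
        (one_le_pow₀ (by linarith))
      have h2 : ℓ ^ 18 ≤ √q * ℓ ^ 18 := le_mul_of_one_le_left (by positivity) hs1
      have h3 : √q * ℓ ^ 3 ≤ √q * ℓ ^ 18 := by
        gcongr
        · linarith
        · norm_num
      calc 1 + 2 ^ 32 * ℓ ^ 18 * δ * h + 240 * √q * ℓ ^ 3
          = 1 + 2 ^ 32 * K * ℓ ^ 18 + 240 * (√q * ℓ ^ 3) := by rw [← e2]; ring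
        _ ≤ √q * ℓ ^ 18 + 2 ^ 32 * K * (√q * ℓ ^ 18) + 240 * (√q * ℓ ^ 18) := by gcongr
        _ = _ := by ring
    have e4 : (241 + 2 ^ 32 * K) * (√q * ℓ ^ 18) * ℓ ≤ ε / 2 * h * ℓ := by
      calc (241 + 2 ^ 32 * K) * (√q * ℓ ^ 18) * ℓ = (241 + 2 ^ 32 * K) * (√q * ℓ ^ 19) := by ring
        _ ≤ (241 + 2 ^ 32 * K) * (√q * (η * √q)) := by
          gcongr; exact (hpow 19 (by norm_num)).trans hη20
        _ = (241 + 2 ^ 32 * K) * η * q := by rw [← hs]; ring_nf; simp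
        _ ≤ ε / 4 * (2 * ℓ * h) := by gcongr
        _ = _ := by ring
    have e5 := le_of_mul_le_mul_right e4 hℓ0
    have := mul_pos hε hh0
    linarith
  · rw [div_le_iff₀ (by linarith)]
    have h1 : ℓ ≤ η * √q := by
      have := hpow 1 (by norm_num)
      rw [pow_one] at this
      exact this.trans hη20
    calc Real.log q ≤ ℓ := by linarith
      _ ≤ ε / 2 * √q := h1.trans (by gcongr; linarith)
      _ ≤ ε / 2 * (√q * √q) := by gcongr; exact le_mul_of_one_le_left (by positivity) hs1
      _ ≤ ε / 2 * (2 * (q - 1)) := by rw [hs]; gcongr; linarith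
      _ = _ := by ring

lemma succ_div_pow_sub_one_le {x L : ℝ} (hx : 2 ≤ x) (hL : 0 ≤ L) {n : ℕ} (hn : 1 ≤ n) :
    ((n : ℝ) + 1) * L / (x ^ (n + 1) - 1) ≤ n * L / (x ^ n - 1) := by
  have h1 : 2 ≤ x ^ n := hx.trans (le_self_pow₀ (by linarith) (by omega))
  have h2 : x ^ (n + 1) = x ^ n * x := pow_succ x n
  have h3 : 2 * x ^ n ≤ x ^ n * x := by nlinarith
  have hn' : (1 : ℝ) ≤ n := by exact_mod_cast hn
  rw [h2, div_le_div_iff₀ (by linarith) (by linarith)]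
  have : ((n : ℝ) + 1) * (x ^ n - 1) ≤ n * (x ^ n * x - 1) := by nlinarith
  nlinarith

lemma sub_one_le_pow_of_pow_eq_neg_one {q n r : ℕ} (h : ((n : ZMod q)) ^ r = -1) :
    (q : ℝ) - 1 ≤ (n : ℝ) ^ r := by
  have h1 : ((n ^ r + 1 : ℕ) : ZMod q) = 0 := by push_cast; rw [h]; ring
  have h2 := Nat.le_of_dvd (Nat.succ_pos _) ((ZMod.natCast_eq_zero_iff _ _).1 h1)
  have h3 : (q : ℝ) ≤ (n : ℝ) ^ r + 1 := by exact_mod_cast h2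
  linarith

/-- If `p ^ r` has even order `g` modulo the prime `q`, then `p ^ (g / 2)` is large. -/
lemma le_pow_gp_div_two {q r p : ℕ} [Fact q.Prime] (hr : 0 < r) {Y : ℝ}
    (hY : Y ^ r ≤ q - 1) (hg : 2 ≤ gp q r p) (hg2 : 2 ∣ gp q r p) :
    Y ≤ (p : ℝ) ^ (gp q r p / 2) := by
  obtain ⟨e, he⟩ := hg2
  have he2 : gp q r p / 2 = e := by omega
  rw [he2]
  have hsq : (((p ^ e : ℕ) : ZMod q) ^ r) * (((p ^ e : ℕ) : ZMod q) ^ r) = 1 := by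
    have := pow_orderOf_eq_one ((p : ZMod q) ^ r)
    rw [show orderOf ((p : ZMod q) ^ r) = 2 * e from he] at this
    rw [← this]
    push_cast
    ring
  have hne : ((p ^ e : ℕ) : ZMod q) ^ r ≠ 1 := by
    intro h
    have h' : ((p : ZMod q) ^ r) ^ e = 1 := by
      rw [← h]; push_cast; ring
    have := orderOf_le_of_pow_eq_one (by omega) h'
    rw [show orderOf ((p : ZMod q) ^ r) = 2 * e from he] at this
    omega
  have h1 := (mul_self_eq_one_iff.1 hsq).resolve_left hne
  have h2 := hY.trans (sub_one_le_pow_of_pow_eq_neg_one h1)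
  push_cast at h2
  exact le_of_pow_le_pow_left₀ hr.ne' (by positivity) h2

lemma Sterm_le {q r p : ℕ} [Fact q.Prime] (hq : 3 ≤ q) (hp : p.Prime) (hr : 0 < r) {Y : ℝ}
    (hY1 : 1 ≤ Y) (hY : Y ^ r ≤ q - 1) :
    Sterm q r p ≤ 8 * (p : ℝ) ^ (-(3 / 2) : ℝ) * Y ^ (-(1 / 8) : ℝ) := by
  have hp2 : (2 : ℝ) ≤ p := by exact_mod_cast hp.two_le
  have hp0 : (0 : ℝ) < p := by linarith
  have hL : 0 ≤ Real.log p := Real.log_nonneg (by linarith)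
  have hL2 : Real.log p ≤ 4 * (p : ℝ) ^ (1 / 4 : ℝ) := by
    have := Real.log_le_rpow_div hp0.le (by norm_num : (0 : ℝ) < 1 / 4)
    linarith
  have hR : 0 ≤ 8 * (p : ℝ) ^ (-(3 / 2) : ℝ) * Y ^ (-(1 / 8) : ℝ) := by positivity
  set g := gp q r p with hg
  have hmain : ∀ P : ℝ, Y ≤ P → ∀ t : ℝ, t ≤ 2 * Real.log p * ((p : ℝ) ^ (-(7 / 4) : ℝ) *
      P ^ (-(1 / 8) : ℝ)) → t ≤ 8 * (p : ℝ) ^ (-(3 / 2) : ℝ) * Y ^ (-(1 / 8) : ℝ) := by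
    intro P hP t ht
    refine ht.trans ?_
    have h1 : P ^ (-(1 / 8) : ℝ) ≤ Y ^ (-(1 / 8) : ℝ) :=
      Real.rpow_le_rpow_of_nonpos (by linarith) hP (by norm_num)
    have h2 : (p : ℝ) ^ (-(3 / 2) : ℝ) = (p : ℝ) ^ (1 / 4 : ℝ) * (p : ℝ) ^ (-(7 / 4) : ℝ) := by
      rw [← Real.rpow_add hp0]; norm_num
    calc 2 * Real.log p * ((p : ℝ) ^ (-(7 / 4) : ℝ) * P ^ (-(1 / 8) : ℝ))
        ≤ 2 * (4 * (p : ℝ) ^ (1 / 4 : ℝ)) * ((p : ℝ) ^ (-(7 / 4) : ℝ) * Y ^ (-(1 / 8) : ℝ)) := by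
          have : 0 ≤ P := by linarith
          gcongr
      _ = _ := by rw [h2]; ring
  rw [Sterm]
  by_cases hpq : p = q
  · rw [if_pos hpq]
    exact hR
  rw [if_neg hpq, ← hg]
  have hA1 : (q : ℝ) * Real.log p / ((p : ℝ) ^ q - 1)
          - ((q : ℝ) - 1) * Real.log p / ((p : ℝ) ^ (q - 1) - 1) ≤ 0 := by
    have := succ_div_pow_sub_one_le hp2 hL (n := q - 1) (by omega)
    rw [Nat.sub_add_cancel (by omega), Nat.cast_sub (by omega), Nat.cast_one, sub_add_cancel] at this
    linarith
  have hA3 : 3 ≤ g → (g : ℝ) * Real.log p / ((p : ℝ) ^ g - 1)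
          - ((g : ℝ) - 1) * Real.log p / ((p : ℝ) ^ (g - 1) - 1) ≤ 0 := by
    intro h3
    have := succ_div_pow_sub_one_le hp2 hL (n := g - 1) (by omega)
    rw [Nat.sub_add_cancel (by omega), Nat.cast_sub (by omega), Nat.cast_one, sub_add_cancel] at this
    linarith
  by_cases h2 : g = 2
  · rw [if_neg (by omega), if_neg (by omega), if_pos h2, if_neg (by omega)]
    have hP := le_pow_gp_div_two hr hY (p := p) (by omega) (by omega)
    rw [← hg, h2, show 2 / 2 = 1 from rfl, pow_one] at hP
    refine hmain _ hP _ ?_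
    have e1 : (p : ℝ) ^ (-(7 / 4) : ℝ) * (p : ℝ) ^ (-(1 / 8) : ℝ) =
        (p : ℝ) ^ (1 / 8 : ℝ) * ((p : ℝ) ^ 2)⁻¹ := by
      rw [← Real.rpow_natCast, ← Real.rpow_neg hp0.le, ← Real.rpow_add hp0, ← Real.rpow_add hp0]
      norm_num
    have e2 : 1 ≤ (p : ℝ) ^ (1 / 8 : ℝ) := Real.one_le_rpow (by linarith) (by norm_num)
    rw [e1, zero_add, zero_add, add_zero]
    have e3 : ((p : ℝ) ^ 2 - 1)⁻¹ ≤ 2 * ((p : ℝ) ^ 2)⁻¹ := by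
      rw [← div_eq_mul_inv, inv_eq_one_div, div_le_div_iff₀ (by nlinarith) (by positivity)]
      nlinarith
    calc Real.log p / ((p : ℝ) ^ 2 - 1) ≤ Real.log p * (2 * ((p : ℝ) ^ 2)⁻¹) := by
          rw [div_eq_mul_inv]; gcongr
      _ = 2 * Real.log p * (1 * ((p : ℝ) ^ 2)⁻¹) := by ring
      _ ≤ _ := by gcongr
  by_cases h4 : 4 ≤ g ∧ 2 ∣ g
  · rw [if_neg (by omega), if_pos (by omega), if_neg (by omega), if_pos h4]
    have hP := le_pow_gp_div_two hr hY (p := p) (by omega) h4.2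
    rw [← hg] at hP
    refine hmain _ hP _ ?_
    have hPp : (p : ℝ) ^ 2 ≤ (p : ℝ) ^ (g / 2) := pow_le_pow_right₀ (by linarith) (by omega)
    set P := (p : ℝ) ^ (g / 2)
    have hP4 : 4 ≤ P := by nlinarith
    have hP0 : 0 < P := by linarith
    have e1 : P⁻¹ ≤ (p : ℝ) ^ (-(7 / 4) : ℝ) * P ^ (-(1 / 8) : ℝ) := by
      have : P⁻¹ = P ^ (-(7 / 8) : ℝ) * P ^ (-(1 / 8) : ℝ) := by
        rw [← Real.rpow_add hP0, ← Real.rpow_neg_one]; norm_num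
      rw [this]
      have h5 : P ^ (-(7 / 8) : ℝ) ≤ ((p : ℝ) ^ 2) ^ (-(7 / 8) : ℝ) :=
        Real.rpow_le_rpow_of_nonpos (by positivity) hPp (by norm_num)
      rw [← Real.rpow_natCast, ← Real.rpow_mul hp0.le] at h5
      norm_num at h5
      gcongr
    have e3 : (P - P⁻¹)⁻¹ ≤ 2 * P⁻¹ := by
      have hi : P⁻¹ ≤ P / 2 := by
        rw [inv_le_iff_one_le_mul₀ hP0]; nlinarith
      rw [← div_eq_mul_inv, inv_eq_one_div, div_le_div_iff₀ (by linarith) hP0]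
      linarith
    have e4 : Real.log p / (P - P⁻¹) ≤ 2 * Real.log p * P⁻¹ := by
      rw [div_eq_mul_inv]
      nlinarith
    have e5 : 2 * Real.log p * P⁻¹ ≤
        2 * Real.log p * ((p : ℝ) ^ (-(7 / 4) : ℝ) * P ^ (-(1 / 8) : ℝ)) := by gcongr
    have := hA3 (by omega)
    linarith
  · rw [if_neg h2, if_neg h4]
    refine le_trans ?_ hR
    split_ifs with h1 h3 h3
    · omega
    · linarith
    · linarith [hA3 h3]
    · simp

lemma exists_Smq_le : ∃ C : ℝ, 0 ≤ C ∧ ∀ q r : ℕ, q.Prime → 3 ≤ q → 0 < r → ∀ Y : ℝ, 1 ≤ Y →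
    Y ^ r ≤ q - 1 → Smq q r ≤ C * Y ^ (-(1 / 8) : ℝ) := by
  have hs : Summable fun p : Nat.Primes => 8 * ((p : ℕ) : ℝ) ^ (-(3 / 2) : ℝ) :=
    ((Real.summable_nat_rpow.2 (by norm_num)).comp_injective Nat.Primes.coe_nat_injective).mul_left 8
  refine ⟨∑' p : Nat.Primes, 8 * ((p : ℕ) : ℝ) ^ (-(3 / 2) : ℝ),
    tsum_nonneg fun p => by positivity, fun q r hq hq3 hr Y hY1 hY => ?_⟩
  have : Fact q.Prime := ⟨hq⟩
  rw [Smq, ← tsum_mul_right]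
  by_cases hsum : Summable fun p : Nat.Primes => Sterm q r p
  · exact hsum.tsum_le_tsum (fun p => Sterm_le hq3 p.2 hr hY1 hY) (hs.mul_right _)
  · rw [tsum_eq_zero_of_not_summable hsum]
    exact tsum_nonneg fun p => by positivity

/-- There is an absolute constant `c₁` such that for every positive integer
`r`, every prime `q ≥ exp(2r(log r + log log(r+2) + c₁))` with `q ≡ 1 (mod 2r)`, and every
positive integer `k` with `gcd(k, q−1) = r`, one has `γ_{k,q} > 1/2` and `γ'_{k,q} > 1/2`. -/
theorem statement2 :
    ∃ c₁ : ℝ, ∀ r : ℕ, 0 < r → ∀ q : ℕ, q.Prime →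
      Real.exp (2 * r * (Real.log r + Real.log (Real.log (r + 2)) + c₁)) ≤ (q : ℝ) →
      q % (2 * r) = 1 →
      ∀ k : ℕ, 0 < k → Nat.gcd k (q - 1) = r →
        1 / 2 < gammakq q k ∧ 1 / 2 < gammakq' q k := by
  set ε : ℝ := (Real.eulerMascheroniConstant - 1 / 2) / 4 with hε
  have hε0 : 0 < ε := by
    have := Real.one_half_lt_eulerMascheroniConstant
    rw [hε]
    linarith
  obtain ⟨C, hC0, hC⟩ := exists_Smq_le
  obtain ⟨Q, hQ⟩ := exists_two_mul_gammaK_sub_le hε0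
  have hlim : Tendsto (fun c : ℝ => C * Real.exp c ^ (-(1 / 8) : ℝ)) atTop (𝓝 0) := by
    have := ((tendsto_rpow_neg_atTop (show (0 : ℝ) < 1 / 8 by norm_num)).comp
      Real.tendsto_exp_atTop).const_mul C
    rwa [mul_zero] at this
  obtain ⟨c, ⟨hcε, hcQ⟩, hc1⟩ := ((((hlim.eventually_lt_const hε0).and
    (Real.tendsto_exp_atTop.eventually_ge_atTop Q)).and (eventually_ge_atTop 1))).exists
  refine ⟨c, fun r hr q hq hqr hmod k _ hk => ?_⟩
  have hr1 : (1 : ℝ) ≤ r := by exact_mod_cast hr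
  have hq0 : (0 : ℝ) < q := by exact_mod_cast hq.pos
  have hexp : Real.exp (2 * r * c) ≤ q := by
    refine le_trans (Real.exp_le_exp.2 ?_) hqr
    have h1 := Real.log_nonneg hr1
    have h3 : 1 ≤ Real.log (r + 2) := by
      rw [Real.le_log_iff_exp_le (by linarith)]
      linarith [Real.exp_one_lt_d9]
    have h2 := Real.log_nonneg h3
    gcongr
    linarith
  have hlog : 2 * r * c ≤ Real.log q := (Real.le_log_iff_exp_le hq0).2 hexp
  have hrc : (1 : ℝ) ≤ r * c := by nlinarith
  have hrlog : (r : ℝ) ≤ Real.log q := by nlinarith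
  have hYr : Real.exp c ^ r ≤ q - 1 := by
    rw [← Real.exp_nat_mul]
    have h1 : Real.exp (2 * r * c) = Real.exp (r * c) * Real.exp (r * c) := by
      rw [← Real.exp_add]; ring_nf
    have h2 := Real.add_one_le_exp (r * c)
    nlinarith
  have hQq : Q ≤ q := by
    refine hcQ.trans (le_trans (Real.exp_le_exp.2 ?_) hexp)
    nlinarith
  have hq3 : 3 ≤ q := by
    have h1 := Real.add_one_le_exp (2 * r * c)
    have : (3 : ℝ) ≤ q := by nlinarith
    exact_mod_cast this
  have hdvd : 2 * r ∣ q - 1 := by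
    rw [← hmod]
    exact Nat.dvd_sub_mod q
  have hS := hC q r hq hq3 hr (Real.exp c) (Real.one_le_exp (by linarith)) hYr
  obtain ⟨hG, hL⟩ := hQ q r hq hQq hr hrlog hdvd
  have hcast : (((q - 1) / r : ℕ) : ℝ) = ((q : ℝ) - 1) / r := by
    rw [Nat.cast_div ((Dvd.intro_left 2 rfl).trans hdvd) (by positivity),
      Nat.cast_sub hq.one_le, Nat.cast_one]
  have hL0 : 0 ≤ Real.log q / ((q : ℝ) - 1) :=
    div_nonneg (by linarith) (sub_nonneg.2 (by exact_mod_cast hq.one_le))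
  have hh1 : 1 ≤ ((q : ℝ) - 1) / r := by
    rw [← hcast]
    exact_mod_cast Nat.div_pos (Nat.le_of_dvd (by omega) ((Dvd.intro_left 2 rfl).trans hdvd)) hr
  have hmain : 1 / 2 < gammakq q k := by
    rw [gammakq, hk, hcast]
    set h := ((q : ℝ) - 1) / r
    have e1 : 1 / h * (2 * gammaK q (2 * r) - gammaK q r) ≤ ε := by
      rw [one_div_mul_eq_div, div_le_iff₀ (by linarith)]
      exact hG
    have e2 : Real.log q / (h * ((q : ℝ) - 1)) ≤ ε := by
      refine le_trans ?_ hL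
      rw [mul_comm, ← div_div]
      exact div_le_self hL0 hh1
    linarith
  refine ⟨hmain, ?_⟩
  rw [gammakq']
  linarith
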